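/- arXiv:1310.0081 — 10 statements merged into one kernel-verified Lean document; each statement's English description precedes it below -/
import Mathlib

section
/- Let Ω ⊆ ℝ² be open and let X, Y : Ω → ℝ² be real-analytic vector fields. Assume Y tracks X, i.e. there is a continuous function f : Ω → ℝ such that DX(p)(Y(p)) − DY(p)(X(p)) = f(p) • X(p) for all p ∈ Ω. Let U ⊆ Ω be a connected open set whose closure cl U is compact and contained in Ω, let K := {p ∈ cl U : X(p) = 0}, and assume K ⊆ U. Assume moreover that K is essential: there exists ε > 0 such that every continuous map X' : cl U → ℝ² with ‖X'(p) − X(p)‖ < ε for all p ∈ cl U has a zero in cl U. Then there exists p ∈ K with Y(p) = 0. -/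
open Set

namespace HirschAux
open Filter Topology Metric

/-- The plane. -/
abbrev E2 := EuclideanSpace ℝ (Fin 2)

/-- Determinant of two plane vectors. -/
noncomputable def det2 (v w : E2) : ℝ := v 0 * w 1 - v 1 * w 0

/-- Rotation by a right angle. -/
noncomputable def rot (v : E2) : E2 := !₂[- v 1, v 0]

lemma gron {F : Type*} [NormedAddCommGroup F] [NormedSpace ℝ F] {C b : ℝ} (hC : 0 < C)
    {g g' : ℝ → F} (hg : ∀ t ∈ Icc 0 b, HasDerivAt g (g' t) t)
    (hb : ∀ t ∈ Icc 0 b, ‖g' t‖ ≤ C * ‖g t‖) (h0 : 0 ≤ b) :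
    ‖g b - g 0‖ ≤ (Real.exp (C * b) - 1) * ‖g 0‖ := by
  have := norm_le_gronwallBound_of_norm_deriv_right_le (f := fun t => g t - g 0) (f' := g')
    (δ := 0) (K := C) (ε := C * ‖g 0‖) (a := 0) (b := b)
    (fun t ht => ((hg t ht).continuousAt.continuousWithinAt).sub continuousWithinAt_const)
    (fun t ht => ((hg t ⟨ht.1, ht.2.le⟩).sub_const _).hasDerivWithinAt)
    (by simp)
    (fun t ht => by
      have h1 := hb t ⟨ht.1, ht.2.le⟩
      have h2 : ‖g t‖ ≤ ‖g t - g 0‖ + ‖g 0‖ := norm_le_norm_sub_add _ _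
      nlinarith)
    b ⟨h0, le_rfl⟩
  rw [gronwallBound_of_K_ne_0 hC.ne'] at this
  simp only [sub_zero, zero_mul, zero_add] at this
  rw [mul_div_cancel_left₀ _ hC.ne'] at this
  linarith

lemma gron2 {F : Type*} [NormedAddCommGroup F] [NormedSpace ℝ F] {C ε : ℝ} (hC : 0 < C)
    {g g' : ℝ → F} (hg : ∀ t ∈ Ioo (-ε) ε, HasDerivAt g (g' t) t)
    (hb : ∀ t ∈ Ioo (-ε) ε, ‖g' t‖ ≤ C * ‖g t‖) (t : ℝ) (ht : t ∈ Ioo (-ε) ε) :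
    ‖g t - g 0‖ ≤ (Real.exp (C * |t|) - 1) * ‖g 0‖ := by
  rcases le_total 0 t with h | h
  · rw [abs_of_nonneg h]
    exact gron hC (fun s hs => hg s ⟨by linarith [hs.1, ht.2], by linarith [hs.2, ht.2]⟩)
      (fun s hs => hb s ⟨by linarith [hs.1, ht.2], by linarith [hs.2, ht.2]⟩) h
  · rw [abs_of_nonpos h]
    have := gron (g := fun s => g (-s)) (g' := fun s => - g' (-s)) (b := -t) hC
      (fun s hs => by
        have h1 := hg (-s) ⟨by linarith [hs.2, ht.1], by linarith [hs.1, ht.1]⟩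
        have h2 := h1.scomp s (hasDerivAt_neg s)
        rw [neg_one_smul] at h2
        exact h2)
      (fun s hs => by
        rw [norm_neg]
        exact hb (-s) ⟨by linarith [hs.2, ht.1], by linarith [hs.1, ht.1]⟩) (by linarith)
    simpa using this

lemma abs_coord_le (v : E2) (i : Fin 2) : |v i| ≤ ‖v‖ := by
  simpa using PiLp.norm_apply_le v i

lemma norm_sq_E2 (v : E2) : ‖v‖ ^ 2 = v 0 ^ 2 + v 1 ^ 2 := by
  simp [EuclideanSpace.norm_sq_eq]

lemma abs_det2_le (v w : E2) : |det2 v w| ≤ ‖v‖ * ‖w‖ := by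
  apply abs_le_of_sq_le_sq _ (by positivity)
  rw [mul_pow, norm_sq_E2, norm_sq_E2, det2]
  nlinarith [sq_nonneg (v 0 * w 0 + v 1 * w 1)]

lemma trace_id (A : E2 →L[ℝ] E2) (v w : E2) :
    det2 (A v) w + det2 v (A w) =
      ((A (EuclideanSpace.single 0 1)) 0 + (A (EuclideanSpace.single 1 1)) 1) * det2 v w := by
  have key : ∀ v : E2, A v = v 0 • A (EuclideanSpace.single 0 1)
      + v 1 • A (EuclideanSpace.single 1 1) := by
    intro v
    rw [← map_smul, ← map_smul, ← map_add]
    congr 1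
    ext i
    fin_cases i <;> simp
  rw [key v, key w]
  simp only [det2, PiLp.add_apply, PiLp.smul_apply, smul_eq_mul]
  ring

lemma hasDerivAt_coord {γ : ℝ → E2} {γ' : E2} {t : ℝ} (h : HasDerivAt γ γ' t) (i : Fin 2) :
    HasDerivAt (fun s => γ s i) (γ' i) t :=
  (EuclideanSpace.proj (𝕜 := ℝ) i).hasFDerivAt.comp_hasDerivAt t h

lemma hasDerivAt_det2 {γ β : ℝ → E2} {γ' β' : E2} {t : ℝ} (h : HasDerivAt γ γ' t)
    (h' : HasDerivAt β β' t) :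
    HasDerivAt (fun s => det2 (γ s) (β s)) (det2 γ' (β t) + det2 (γ t) β') t := by
  have := ((hasDerivAt_coord h 0).mul (hasDerivAt_coord h' 1)).sub
    ((hasDerivAt_coord h 1).mul (hasDerivAt_coord h' 0))
  exact this.congr_deriv (by simp only [det2]; ring)

/-- Local flow of `Y` with the growth estimates for `X` and `det2 X Y`. -/
lemma flow {Ω : Set E2} (hΩ : IsOpen Ω) {X Y : E2 → E2}
    (hX : AnalyticOnNhd ℝ X Ω) (hY : AnalyticOnNhd ℝ Y Ω)
    {f : E2 → ℝ} (hf : ContinuousOn f Ω)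
    (htrack : ∀ p ∈ Ω, fderiv ℝ X p (Y p) - fderiv ℝ Y p (X p) = f p • X p)
    {p : E2} (hp : p ∈ Ω) :
    ∃ φ : E2 × ℝ → E2, ∃ r ε C : ℝ, 0 < r ∧ 0 < ε ∧ 0 < C ∧
      ContinuousOn φ (ball p r ×ˢ Ioo (-ε) ε) ∧
      (∀ x ∈ ball p r, φ (x, 0) = x) ∧
      (∀ x ∈ ball p r, ∀ t ∈ Ioo (-ε) ε, HasDerivAt (fun s => φ (x, s)) (Y (φ (x, t))) t) ∧
      (∀ x ∈ ball p r, ∀ t ∈ Ioo (-ε) ε,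
        ‖X (φ (x, t)) - X x‖ ≤ (Real.exp (C * |t|) - 1) * ‖X x‖) ∧
      (∀ x ∈ ball p r, ∀ t ∈ Ioo (-ε) ε,
        |det2 (X (φ (x, t))) (Y (φ (x, t))) - det2 (X x) (Y x)|
          ≤ (Real.exp (C * |t|) - 1) * |det2 (X x) (Y x)|) := by
  obtain ⟨ε₀, hε₀, a, r₀, L, K, hr₀, hPL⟩ :=
    IsPicardLindelof.of_contDiffAt_one (f := Y) (x₀ := p) ((hY p hp).contDiffAt)
  obtain ⟨φ, hφ1, hφ2⟩ :=
    (hPL 0).exists_forall_mem_closedBall_eq_hasDerivWithinAt_continuousOn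
  simp only [zero_sub, zero_add] at hφ1 hφ2
  have hr₀' : (0:ℝ) < r₀ := hr₀
  -- good set
  have hcY : ContinuousAt (fun q => ‖fderiv ℝ Y q‖) p := ((hY p hp).fderiv.continuousAt).norm
  have hcf : ContinuousAt (fun q => |f q|) p := (hf.continuousAt (hΩ.mem_nhds hp)).abs
  set A := ‖fderiv ℝ Y p‖ + |f p| + 1 with hA
  have hA1 : ∀ᶠ q in 𝓝 p, q ∈ Ω ∧ ‖fderiv ℝ Y q‖ < A ∧ |f q| < A := by
    refine Filter.Eventually.and (hΩ.mem_nhds hp) ((hcY.eventually_lt_const ?_).and (hcf.eventually_lt_const ?_))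
    · simp only [hA]; linarith [abs_nonneg (f p)]
    · simp only [hA]; linarith [norm_nonneg (fderiv ℝ Y p)]
  have hφp : φ (p, 0) = p := (hφ1 p (mem_closedBall_self hr₀'.le)).1
  have hnhds : closedBall p (r₀:ℝ) ×ˢ Icc (-ε₀) ε₀ ∈ 𝓝 (p, (0:ℝ)) :=
    prod_mem_nhds (closedBall_mem_nhds _ hr₀') (Icc_mem_nhds (by linarith) hε₀)
  have hcφ : ContinuousAt φ (p, 0) := hφ2.continuousAt hnhds
  have hev : ∀ᶠ z in 𝓝 (p, (0:ℝ)), φ z ∈ Ω ∧ ‖fderiv ℝ Y (φ z)‖ < A ∧ |f (φ z)| < A := by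
    refine Filter.Tendsto.eventually hcφ
      (p := fun q => q ∈ Ω ∧ ‖fderiv ℝ Y q‖ < A ∧ |f q| < A) ?_
    rw [hφp]; exact hA1
  have hev2 := hev.and hnhds
  rw [nhds_prod_eq] at hev2
  obtain ⟨P, hP, Q, hQ, hPQ⟩ := eventually_prod_iff.1 hev2
  obtain ⟨r, hr, hrP⟩ := Metric.eventually_nhds_iff_ball.1 hP
  obtain ⟨ε, hε, hεQ⟩ := Metric.eventually_nhds_iff_ball.1 hQ
  have hball : ball (0:ℝ) ε = Ioo (-ε) ε := by simp [Real.ball_eq_Ioo]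
  rw [hball] at hεQ
  have hgood : ∀ x ∈ ball p r, ∀ t ∈ Ioo (-ε) ε,
      (φ (x,t) ∈ Ω ∧ ‖fderiv ℝ Y (φ (x,t))‖ < A ∧ |f (φ (x,t))| < A) ∧
      x ∈ closedBall p (r₀:ℝ) ∧ t ∈ Icc (-ε₀) ε₀ := by
    intro x hx t ht
    have := hPQ (hrP x hx) (hεQ t ht)
    exact ⟨this.1, this.2.1, this.2.2⟩
  have hder : ∀ x ∈ ball p r, ∀ t ∈ Ioo (-ε) ε,
      HasDerivAt (fun s => φ (x, s)) (Y (φ (x, t))) t := by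
    intro x hx t ht
    have h1 := (hφ1 x (hgood x hx t ht).2.1).2 t (hgood x hx t ht).2.2
    refine h1.hasDerivAt ?_
    exact mem_of_superset (Ioo_mem_nhds ht.1 ht.2) (fun s hs => (hgood x hx s hs).2.2)
  have h00 : (0:ℝ) ∈ Ioo (-ε) ε := ⟨by linarith, hε⟩
  have hinit : ∀ x ∈ ball p r, φ (x, 0) = x := fun x hx => (hφ1 x (hgood x hx 0 h00).2.1).1
  have hApos : 0 < A := by positivity
  have hderX : ∀ x ∈ ball p r, ∀ t ∈ Ioo (-ε) ε,
      HasDerivAt (fun s => X (φ (x, s)))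
        (fderiv ℝ Y (φ (x,t)) (X (φ (x,t))) + f (φ (x,t)) • X (φ (x,t))) t := by
    intro x hx t ht
    have hΩt := (hgood x hx t ht).1.1
    have h1 := ((hX _ hΩt).differentiableAt.hasFDerivAt).comp_hasDerivAt t (hder x hx t ht)
    have h2 := htrack _ hΩt
    rw [sub_eq_iff_eq_add] at h2
    rw [h2, add_comm] at h1
    exact h1
  have hderY : ∀ x ∈ ball p r, ∀ t ∈ Ioo (-ε) ε,
      HasDerivAt (fun s => Y (φ (x, s)))
        (fderiv ℝ Y (φ (x,t)) (Y (φ (x,t)))) t := by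
    intro x hx t ht
    have hΩt := (hgood x hx t ht).1.1
    exact ((hY _ hΩt).differentiableAt.hasFDerivAt).comp_hasDerivAt t (hder x hx t ht)
  refine ⟨φ, r, ε, 3 * A, hr, hε, by positivity, ?_, hinit, hder, ?_, ?_⟩
  · exact hφ2.mono fun z hz => (hgood z.1 hz.1 z.2 hz.2).2
  · intro x hx t ht
    have := gron2 (C := 3 * A) (by positivity) (hderX x hx) ?_ t ht
    · simpa [hinit x hx] using this
    · intro s hs
      obtain ⟨h1, h2, h3⟩ := (hgood x hx s hs).1
      refine (norm_add_le _ _).trans ?_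
      rw [norm_smul, Real.norm_eq_abs]
      have h4 := ContinuousLinearMap.le_opNorm (fderiv ℝ Y (φ (x,s))) (X (φ (x,s)))
      nlinarith [norm_nonneg (X (φ (x,s)))]
  · intro x hx t ht
    have := gron2 (C := 3 * A) (ε := ε) (g := fun s => det2 (X (φ (x, s))) (Y (φ (x, s))))
      (g' := fun s => (((fderiv ℝ Y (φ (x,s))) (EuclideanSpace.single 0 1)) 0
        + ((fderiv ℝ Y (φ (x,s))) (EuclideanSpace.single 1 1)) 1 + f (φ (x,s)))
          * det2 (X (φ (x, s))) (Y (φ (x, s))))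
      (by positivity) ?_ ?_ t ht
    · simpa [hinit x hx] using this
    · intro s hs
      have h1 := hasDerivAt_det2 (hderX x hx s hs) (hderY x hx s hs)
      refine h1.congr_deriv ?_
      have h2 := trace_id (fderiv ℝ Y (φ (x,s))) (X (φ (x,s))) (Y (φ (x,s)))
      rw [add_mul, ← h2]
      simp only [det2, PiLp.add_apply, PiLp.smul_apply, smul_eq_mul]
      ring
    · intro s hs
      obtain ⟨h1, h2, h3⟩ := (hgood x hx s hs).1
      rw [norm_mul]
      gcongr
      rw [Real.norm_eq_abs]
      have h4 : ∀ i : Fin 2,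
          |((fderiv ℝ Y (φ (x,s))) (EuclideanSpace.single i 1)) i| ≤ A := by
        intro i
        refine (abs_coord_le _ _).trans ?_
        have := ContinuousLinearMap.le_opNorm (fderiv ℝ Y (φ (x,s)))
          (EuclideanSpace.single i (1:ℝ))
        simp at this
        linarith
      have h5 := abs_add_le (((fderiv ℝ Y (φ (x,s))) (EuclideanSpace.single 0 1)) 0
        + ((fderiv ℝ Y (φ (x,s))) (EuclideanSpace.single 1 1)) 1) (f (φ (x,s)))
      have h6 := abs_add_le (((fderiv ℝ Y (φ (x,s))) (EuclideanSpace.single 0 1)) 0)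
        (((fderiv ℝ Y (φ (x,s))) (EuclideanSpace.single 1 1)) 1)
      linarith [h4 0, h4 1]

lemma rot_repr {d w : E2} (hw : w ≠ 0) (h : d 0 * w 0 + d 1 * w 1 = 0) {κ : ℝ}
    (hd : ‖d‖ ≤ κ * ‖w‖) : ∃ t : ℝ, |t| ≤ κ ∧ d = t • rot w := by
  have hw' : 0 < ‖w‖ := norm_pos_iff.2 hw
  have h2 := norm_sq_E2 w
  have h3 : 0 < w 0 ^ 2 + w 1 ^ 2 := by rw [← h2]; positivity
  refine ⟨det2 w d / ‖w‖ ^ 2, ?_, ?_⟩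
  · rw [abs_div, abs_of_nonneg (sq_nonneg ‖w‖), div_le_iff₀ (by positivity)]
    have := abs_det2_le w d
    nlinarith
  · rw [h2]
    ext i
    fin_cases i
    · simp only [rot, det2, PiLp.smul_apply, smul_eq_mul]
      simp
      field_simp
      linear_combination (w 0) * h
    · simp only [rot, det2, PiLp.smul_apply, smul_eq_mul]
      simp
      field_simp
      linear_combination (w 1) * h

lemma hit {Ω : Set E2} (hΩ : IsOpen Ω) {X Y : E2 → E2}
    (hX : AnalyticOnNhd ℝ X Ω) (hY : AnalyticOnNhd ℝ Y Ω)
    {f : E2 → ℝ} (hf : ContinuousOn f Ω)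
    (htrack : ∀ p ∈ Ω, fderiv ℝ X p (Y p) - fderiv ℝ Y p (X p) = f p • X p)
    {p : E2} (hp : p ∈ Ω) (hYp : Y p ≠ 0) {κ : ℝ} (hκ : 0 < κ) :
    ∀ᶠ q in 𝓝 p, ∃ ψ : E2 → E2, ContinuousAt ψ q ∧
      (∃ t : ℝ, |t| ≤ κ ∧ ψ q = p + t • rot (Y p)) ∧
      ∀ᶠ y in 𝓝 q, ‖X (ψ y) - X y‖ ≤ κ * ‖X y‖ ∧
        |det2 (X (ψ y)) (Y (ψ y)) - det2 (X y) (Y y)| ≤ κ * |det2 (X y) (Y y)| := by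
  obtain ⟨φ, r, ε, C, hr, hε, hC, hcont, hinit, hder, hXe, hue⟩ :=
    flow hΩ hX hY hf htrack hp
  have hw' : 0 < ‖Y p‖ := norm_pos_iff.2 hYp
  have hat : ∀ x ∈ ball p r, ∀ t ∈ Ioo (-ε) ε, ContinuousAt φ (x, t) := fun x hx t ht =>
    hcont.continuousAt ((isOpen_ball.prod isOpen_Ioo).mem_nhds ⟨hx, ht⟩)
  have hpb : p ∈ ball p r := mem_ball_self hr
  have h00 : (0:ℝ) ∈ Ioo (-ε) ε := ⟨by linarith, hε⟩
  set h : E2 → ℝ → ℝ := fun x s => (φ (x, s) 0 - p 0) * Y p 0 + (φ (x, s) 1 - p 1) * Y p 1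
    with hh
  -- conditions on small times
  have e1 : ∀ᶠ s in 𝓝 (0:ℝ), Real.exp (C * s) - 1 < κ := by
    have : ContinuousAt (fun s : ℝ => Real.exp (C * s) - 1) 0 := by fun_prop
    exact this.eventually_lt_const (by simpa using hκ)
  have e2 : ∀ᶠ z in 𝓝 (p, (0:ℝ)), ‖φ z - p‖ < κ * ‖Y p‖ := by
    have : ContinuousAt (fun z => ‖φ z - p‖) (p, (0:ℝ)) :=
      ((hat p hpb 0 h00).sub continuousAt_const).norm
    exact this.eventually_lt_const (by simp only [hinit p hpb, sub_self, norm_zero]; positivity)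
  rw [nhds_prod_eq] at e2
  obtain ⟨P, hP, Q, hQ, hPQ⟩ := eventually_prod_iff.1 e2
  have e3 : ∀ᶠ s in 𝓝[≠] (0:ℝ), 0 < slope (h p) 0 s := by
    have hd := hder p hpb 0 h00
    rw [hinit p hpb] at hd
    have hd2 := (((hasDerivAt_coord hd 0).sub_const (p 0)).mul_const (Y p 0)).add
      (((hasDerivAt_coord hd 1).sub_const (p 1)).mul_const (Y p 1))
    have hpos : 0 < Y p 0 * Y p 0 + Y p 1 * Y p 1 := by
      have := norm_sq_E2 (Y p)
      nlinarith [sq_pos_of_pos hw']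
    exact (hasDerivAt_iff_tendsto_slope.1 hd2).eventually_const_lt hpos
  rw [eventually_nhdsWithin_iff] at e3
  obtain ⟨δ, hδ, hδall⟩ := Metric.eventually_nhds_iff_ball.1 (e1.and (hQ.and e3))
  set η := min δ ε / 2 with hη
  have hm : 0 < min δ ε := lt_min hδ hε
  have hη0 : 0 < η := by positivity
  have hηδ : η < δ := by have := min_le_left δ ε; simp only [hη]; linarith
  have hηε : η < ε := by have := min_le_right δ ε; simp only [hη]; linarith
  have hsm : ∀ s ∈ Icc (-η) η, s ∈ ball (0:ℝ) δ ∧ s ∈ Ioo (-ε) ε := by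
    intro s hs
    refine ⟨?_, by linarith [hs.1], by linarith [hs.2]⟩
    rw [mem_ball_zero_iff, Real.norm_eq_abs]
    exact (abs_le.2 hs).trans_lt hηδ
  have hmem1 : η ∈ Icc (-η) η := ⟨by linarith, le_rfl⟩
  have hmem2 : -η ∈ Icc (-η) η := ⟨le_rfl, by linarith⟩
  have hp0 : h p 0 = 0 := by simp [hh, hinit p hpb]
  have hpos : 0 < h p η := by
    have := (hδall η (hsm η hmem1).1).2.2 hη0.ne'
    rw [slope_def_field, hp0, sub_zero, sub_zero] at this
    exact (div_pos_iff_of_pos_right hη0).1 this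
  have hneg : h p (-η) < 0 := by
    have := (hδall (-η) (hsm (-η) hmem2).1).2.2 (by simp [hη0.ne'])
    rw [slope_def_field, hp0, sub_zero, sub_zero, div_neg, ← neg_div] at this
    linarith [(div_pos_iff_of_pos_right hη0).1 this]
  have hcoord : ∀ i : Fin 2, Continuous fun v : E2 => v i := fun i => by fun_prop
  have hhc : ∀ s ∈ Icc (-η) η, ContinuousAt (fun x => h x s) p := by
    intro s hs
    have h1 : ContinuousAt (fun x => φ (x, s)) p :=
      ContinuousAt.comp (f := fun x => (x, s)) (hat p hpb s (hsm s hs).2) (by fun_prop)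
    have h2 : ∀ i, ContinuousAt (fun x => φ (x, s) i) p := fun i =>
      (hcoord i).continuousAt.comp h1
    exact (((h2 0).sub continuousAt_const).mul continuousAt_const).add
      (((h2 1).sub continuousAt_const).mul continuousAt_const)
  filter_upwards [hP, ball_mem_nhds p hr, (hhc η hmem1).eventually_const_lt hpos,
    (hhc (-η) hmem2).eventually_lt_const hneg] with q hqP hqr hq1 hq2
  have hcq : ContinuousOn (h q) (Icc (-η) η) := by
    intro s hs
    have h2 := fun i => (hasDerivAt_coord (hder q hqr s (hsm s hs).2) i).continuousAt
    exact ((((h2 0).sub continuousAt_const).mul continuousAt_const).add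
      (((h2 1).sub continuousAt_const).mul continuousAt_const)).continuousWithinAt
  obtain ⟨s, hs, hs0⟩ := intermediate_value_Icc (by linarith) hcq ⟨hq2.le, hq1.le⟩
  have hκs : Real.exp (C * |s|) - 1 ≤ κ := by
    have h1 : Real.exp (C * |s|) ≤ Real.exp (C * η) := by
      gcongr
      exact abs_le.2 hs
    linarith [(hδall η (hsm η hmem1).1).1]
  refine ⟨fun y => φ (y, s), ?_, ?_, ?_⟩
  · exact ContinuousAt.comp (f := fun x => (x, s)) (hat q hqr s (hsm s hs).2) (by fun_prop)
  · have h1 := hPQ hqP (hδall s (hsm s hs).1).2.1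
    obtain ⟨t, ht, hd⟩ := rot_repr (d := φ (q, s) - p) hYp
      (by simpa [hh] using hs0) h1.le
    exact ⟨t, ht, by rw [← hd]; abel⟩
  · filter_upwards [isOpen_ball.mem_nhds hqr] with y hy
    exact ⟨(hXe y hy s (hsm s hs).2).trans (by gcongr),
      (hue y hy s (hsm s hs).2).trans (by gcongr)⟩

lemma line_limit {Ω : Set E2} (hΩ : IsOpen Ω) {X Y : E2 → E2}
    (hX : AnalyticOnNhd ℝ X Ω) (hY : AnalyticOnNhd ℝ Y Ω)
    {f : E2 → ℝ} (hf : ContinuousOn f Ω)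
    (htrack : ∀ p ∈ Ω, fderiv ℝ X p (Y p) - fderiv ℝ Y p (X p) = f p • X p)
    {p : E2} (hp : p ∈ Ω) (hYp : Y p ≠ 0) (hnz : ¬ ∀ᶠ q in 𝓝 p, X q = 0) :
    (∀ᶠ t in 𝓝 (0:ℝ), X (p + t • rot (Y p)) = 0 → t = 0) ∧
    ∃ z : E2, z ≠ 0 ∧ ∀ κ > 0, ∀ᶠ q in 𝓝 p, ∃ τ : ℝ, ‖X q - τ • z‖ ≤ κ * ‖X q‖ := by
  have hline : AnalyticAt ℝ (fun t : ℝ => p + t • rot (Y p)) 0 := by fun_prop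
  have hg : AnalyticAt ℝ (fun t : ℝ => X (p + t • rot (Y p))) 0 :=
    AnalyticAt.fun_comp (g := X) (by simpa using hX p hp) hline
  have hg0 : ¬ ∀ᶠ t in 𝓝 (0:ℝ), X (p + t • rot (Y p)) = 0 := by
    intro h0
    obtain ⟨δ, hδ, hδa⟩ := Metric.eventually_nhds_iff_ball.1 h0
    apply hnz
    filter_upwards [hit hΩ hX hY hf htrack hp hYp
      (κ := min (δ / 2) (1 / 2)) (by positivity)] with q hq
    obtain ⟨ψ, -, ⟨t, ht, hψ⟩, he⟩ := hq
    have h1 := he.self_of_nhds.1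
    rw [hψ, hδa t ?_] at h1
    · have h2 : min (δ / 2) (1 / 2) ≤ (1 / 2 : ℝ) := min_le_right _ _
      rw [zero_sub, norm_neg] at h1
      have h3 : ‖X q‖ ≤ 1 / 2 * ‖X q‖ := h1.trans (by gcongr)
      exact norm_le_zero_iff.1 (by linarith)
    · rw [mem_ball_zero_iff, Real.norm_eq_abs]
      have h2 : min (δ / 2) (1 / 2) ≤ (δ / 2 : ℝ) := min_le_left _ _
      linarith
  obtain ⟨k, z, hz, hz0, hzeq⟩ := hg.exists_eventuallyEq_pow_smul_nonzero_iff.2 hg0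
  have hzpos : 0 < ‖z 0‖ := norm_pos_iff.2 hz0
  refine ⟨?_, z 0, hz0, ?_⟩
  · filter_upwards [hzeq, hz.continuousAt.eventually_ne hz0] with t h1 h2 h3
    rw [h1, smul_eq_zero] at h3
    rcases h3 with h3 | h3
    · simpa using eq_zero_of_pow_eq_zero h3
    · exact absurd h3 h2
  · intro κ hκ
    -- choose κ' small
    set κ' := min (κ / 4) (1 / 2) with hκ'
    have hκ'0 : 0 < κ' := by positivity
    have hκ'1 : κ' ≤ κ / 4 := min_le_left _ _
    have hκ'2 : κ' ≤ 1 / 2 := min_le_right _ _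
    have e1 : ∀ᶠ t in 𝓝 (0:ℝ), ‖z t - z 0‖ < κ' * ‖z 0‖ := by
      have : ContinuousAt (fun t => ‖z t - z 0‖) 0 :=
        (hz.continuousAt.sub continuousAt_const).norm
      exact this.eventually_lt_const (by simp; positivity)
    obtain ⟨δ, hδ, hδa⟩ := Metric.eventually_nhds_iff_ball.1 (hzeq.and e1)
    filter_upwards [hit hΩ hX hY hf htrack hp hYp
      (κ := min (δ / 2) κ') (by positivity)] with q hq
    obtain ⟨ψ, -, ⟨t, ht, hψ⟩, he⟩ := hq
    have hmin1 : min (δ / 2) κ' ≤ δ / 2 := min_le_left _ _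
    have hmin2 : min (δ / 2) κ' ≤ κ' := min_le_right _ _
    obtain ⟨h1, h2⟩ := hδa t (by
      rw [mem_ball_zero_iff, Real.norm_eq_abs]; linarith)
    have h3 := he.self_of_nhds.1
    rw [hψ, h1, sub_zero] at h3
    have h3' : ‖t ^ k • z t - X q‖ ≤ κ' * ‖X q‖ := h3.trans (by gcongr)
    refine ⟨t ^ k, ?_⟩
    have h4 : ‖t ^ k • z t - t ^ k • z 0‖ ≤ |t ^ k| * (κ' * ‖z 0‖) := by
      rw [← smul_sub, norm_smul, Real.norm_eq_abs]; gcongr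
    have h5 : |t ^ k| * ‖z 0‖ ≤ ‖t ^ k • z t‖ + ‖t ^ k • z t - t ^ k • z 0‖ := by
      rw [← Real.norm_eq_abs, ← norm_smul, norm_sub_rev]
      have := norm_le_norm_sub_add (t ^ k • z 0) (t ^ k • z t)
      linarith
    have h6 : ‖t ^ k • z t‖ ≤ ‖t ^ k • z t - X q‖ + ‖X q‖ := norm_le_norm_sub_add _ _
    have h7 : ‖X q - t ^ k • z 0‖ ≤ ‖X q - t ^ k • z t‖ + ‖t ^ k • z t - t ^ k • z 0‖ :=
      norm_sub_le_norm_sub_add_norm_sub _ _ _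
    rw [norm_sub_rev (X q) (t ^ k • z t)] at h7
    have hXq := norm_nonneg (X q)
    have h8 : |t ^ k| * ‖z 0‖ ≤ 3 * ‖X q‖ := by
      have ha : 0 ≤ |t ^ k| * ‖z 0‖ := by positivity
      nlinarith
    nlinarith

/-- `X` stays uniformly transverse to `Y` near `p`. -/
def Transv (X Y : E2 → E2) (p : E2) : Prop :=
  ∃ c > 0, ∀ᶠ q in 𝓝 p, c * ‖X q‖ ≤ |det2 (X q) (Y q)|

/-- `X` becomes parallel to `Y` near `p`. -/
def Paral (X Y : E2 → E2) (p : E2) : Prop :=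
  ∀ c > 0, ∀ᶠ q in 𝓝 p, |det2 (X q) (Y q)| ≤ c * ‖X q‖

lemma not_paral {X Y : E2 → E2} {p : E2} (hnz : ¬ ∀ᶠ q in 𝓝 p, X q = 0)
    (hT : Transv X Y p) : ¬ Paral X Y p := by
  intro hS
  obtain ⟨c, hc, hT⟩ := hT
  apply hnz
  filter_upwards [hT, hS (c / 2) (by positivity)] with q h1 h2
  apply norm_le_zero_iff.1
  nlinarith

lemma transv_or_paral {X Y : E2 → E2} {p z : E2} (hYc : ContinuousAt Y p)
    (hz0 : z ≠ 0)
    (hz : ∀ κ > 0, ∀ᶠ q in 𝓝 p, ∃ τ : ℝ, ‖X q - τ • z‖ ≤ κ * ‖X q‖) :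
    Transv X Y p ∨ Paral X Y p := by
  have key : ∀ κ > 0, ∀ᶠ q in 𝓝 p, ∃ τ : ℝ, ‖X q - τ • z‖ ≤ κ * ‖X q‖ ∧
      |det2 (X q) (Y q) - τ * det2 z (Y p)| ≤ κ * (1 + ‖Y p‖) * ‖X q‖ := by
    intro κ hκ
    have e1 : ∀ᶠ q in 𝓝 p, ‖Y q - Y p‖ < κ := by
      have : ContinuousAt (fun q => ‖Y q - Y p‖) p := (hYc.sub continuousAt_const).norm
      exact this.eventually_lt_const (by simpa using hκ)
    filter_upwards [hz κ hκ, e1] with q ⟨τ, hτ⟩ h1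
    refine ⟨τ, hτ, ?_⟩
    have h2 : det2 (X q) (Y q) - τ * det2 z (Y p)
        = det2 (X q) (Y q - Y p) + det2 (X q - τ • z) (Y p) := by
      simp only [det2, PiLp.sub_apply, PiLp.smul_apply, smul_eq_mul]; ring
    rw [h2]
    have h3 := abs_add_le (det2 (X q) (Y q - Y p)) (det2 (X q - τ • z) (Y p))
    have h4 := abs_det2_le (X q) (Y q - Y p)
    have h5 := abs_det2_le (X q - τ • z) (Y p)
    have h6 : ‖X q‖ * ‖Y q - Y p‖ ≤ ‖X q‖ * κ := by gcongr
    have h7 : ‖X q - τ • z‖ * ‖Y p‖ ≤ κ * ‖X q‖ * ‖Y p‖ := by gcongr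
    nlinarith
  by_cases hd : det2 z (Y p) = 0
  · right
    intro c hc
    filter_upwards [key (c / (1 + ‖Y p‖)) (by positivity)] with q ⟨τ, _, h⟩
    rwa [hd, mul_zero, sub_zero, div_mul_cancel₀ _ (by positivity)] at h
  · left
    have hzpos : 0 < ‖z‖ := norm_pos_iff.2 hz0
    set D := |det2 z (Y p)| with hD
    have hDpos : 0 < D := abs_pos.2 hd
    set κ := min (1 / 2) (D / (4 * ‖z‖ * (1 + ‖Y p‖))) with hκ
    have hκ0 : 0 < κ := by positivity
    have hκ1 : κ ≤ 1 / 2 := min_le_left _ _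
    have hκ2 : κ * (1 + ‖Y p‖) ≤ D / (4 * ‖z‖) := by
      have : κ ≤ D / (4 * ‖z‖ * (1 + ‖Y p‖)) := min_le_right _ _
      calc κ * (1 + ‖Y p‖) ≤ D / (4 * ‖z‖ * (1 + ‖Y p‖)) * (1 + ‖Y p‖) := by gcongr
        _ = D / (4 * ‖z‖) := by field_simp
    refine ⟨D / (4 * ‖z‖), by positivity, ?_⟩
    filter_upwards [key κ hκ0] with q ⟨τ, h1, h2⟩
    have h3 : ‖X q‖ ≤ ‖X q - τ • z‖ + ‖τ • z‖ := norm_le_norm_sub_add _ _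
    rw [norm_smul, Real.norm_eq_abs] at h3
    have hXq := norm_nonneg (X q)
    have h4 : ‖X q‖ ≤ 2 * (|τ| * ‖z‖) := by nlinarith
    have h5 : D / (2 * ‖z‖) * ‖X q‖ ≤ |τ| * D := by
      rw [div_mul_eq_mul_div, div_le_iff₀ (by positivity)]
      nlinarith
    have h6 : |τ * det2 z (Y p)| ≤ |det2 (X q) (Y q)|
        + |det2 (X q) (Y q) - τ * det2 z (Y p)| := by
      have := abs_sub_abs_le_abs_sub (τ * det2 z (Y p)) (det2 (X q) (Y q))
      rw [abs_sub_comm] at this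
      linarith
    rw [abs_mul, ← hD] at h6
    have h7 : κ * (1 + ‖Y p‖) * ‖X q‖ ≤ D / (4 * ‖z‖) * ‖X q‖ := by gcongr
    have h8 : D / (2 * ‖z‖) * ‖X q‖ = 2 * (D / (4 * ‖z‖) * ‖X q‖) := by field_simp; ring
    linarith

lemma paral_nhd {Ω : Set E2} (hΩ : IsOpen Ω) {X Y : E2 → E2}
    (hX : AnalyticOnNhd ℝ X Ω) (hY : AnalyticOnNhd ℝ Y Ω)
    {f : E2 → ℝ} (hf : ContinuousOn f Ω)
    (htrack : ∀ p ∈ Ω, fderiv ℝ X p (Y p) - fderiv ℝ Y p (X p) = f p • X p)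
    {p : E2} (hp : p ∈ Ω) (hYp : Y p ≠ 0) (hnz : ¬ ∀ᶠ q in 𝓝 p, X q = 0)
    (hS : Paral X Y p) :
    ∀ᶠ q in 𝓝 p, X q = 0 → (¬ ∀ᶠ y in 𝓝 q, X y = 0) → ¬ Transv X Y q := by
  obtain ⟨δ, hδ, hδa⟩ := Metric.eventually_nhds_iff_ball.1
    (line_limit hΩ hX hY hf htrack hp hYp hnz).1
  filter_upwards [hit hΩ hX hY hf htrack hp hYp
      (κ := min (δ / 2) (1 / 4)) (by positivity)] with q hq hXq hnzq hT
  obtain ⟨ψ, hψc, ⟨t, ht, hψ⟩, he⟩ := hq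
  have hmin1 : min (δ / 2) (1 / 4) ≤ δ / 2 := min_le_left _ _
  have hmin2 : min (δ / 2) (1 / 4) ≤ (1 / 4 : ℝ) := min_le_right _ _
  have h1 := he.self_of_nhds.1
  rw [hXq, norm_zero, mul_zero, sub_zero] at h1
  have h2 : X (ψ q) = 0 := norm_le_zero_iff.1 h1
  have ht0 : t = 0 := hδa t (by rw [mem_ball_zero_iff, Real.norm_eq_abs]; linarith)
    (by rw [← hψ]; exact h2)
  have hψp : ψ q = p := by rw [hψ, ht0]; simp
  obtain ⟨c, hc, hT⟩ := hT
  have hS' : ∀ᶠ y in 𝓝 q, |det2 (X (ψ y)) (Y (ψ y))| ≤ c / 4 * ‖X (ψ y)‖ := by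
    refine Filter.Tendsto.eventually hψc
      (p := fun x => |det2 (X x) (Y x)| ≤ c / 4 * ‖X x‖) ?_
    rw [hψp]
    exact hS (c / 4) (by positivity)
  apply hnzq
  filter_upwards [he, hT, hS'] with y ⟨h3, h4⟩ h5 h6
  have h3' : ‖X (ψ y) - X y‖ ≤ 1 / 4 * ‖X y‖ := h3.trans (by gcongr)
  have h4' : |det2 (X (ψ y)) (Y (ψ y)) - det2 (X y) (Y y)| ≤ 1 / 4 * |det2 (X y) (Y y)| :=
    h4.trans (by gcongr)
  have h7 : ‖X (ψ y)‖ ≤ ‖X (ψ y) - X y‖ + ‖X y‖ := norm_le_norm_sub_add _ _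
  have h8 := abs_sub_abs_le_abs_sub (det2 (X y) (Y y)) (det2 (X (ψ y)) (Y (ψ y)))
  rw [abs_sub_comm] at h8
  apply norm_le_zero_iff.1
  nlinarith

lemma norm_rot (v : E2) : ‖rot v‖ = ‖v‖ := by
  have h := norm_sq_E2 (rot v)
  have h2 := norm_sq_E2 v
  have h3 : ‖rot v‖ ^ 2 = ‖v‖ ^ 2 := by
    rw [h, h2]; simp [rot]; ring
  exact (sq_eq_sq₀ (norm_nonneg _) (norm_nonneg _)).1 h3

lemma det2_rot (v : E2) : det2 (rot v) v = - ‖v‖ ^ 2 := by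
  rw [norm_sq_E2]; simp [rot, det2]; ring

lemma continuous_rot : Continuous rot := by
  unfold rot
  fun_prop

end HirschAux

open HirschAux Filter Topology Metric in
/-- Main argument: if `Y` has no zero on `K`, build a nearby field without zeros. -/
lemma HirschAux.main
    (Ω : Set (EuclideanSpace ℝ (Fin 2))) (hΩ : IsOpen Ω)
    (X Y : EuclideanSpace ℝ (Fin 2) → EuclideanSpace ℝ (Fin 2))
    (hX : AnalyticOnNhd ℝ X Ω) (hY : AnalyticOnNhd ℝ Y Ω)
    (f : EuclideanSpace ℝ (Fin 2) → ℝ) (hf : ContinuousOn f Ω)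
    (htrack : ∀ p ∈ Ω, fderiv ℝ X p (Y p) - fderiv ℝ Y p (X p) = f p • X p)
    (U : Set (EuclideanSpace ℝ (Fin 2))) (hUopen : IsOpen U) (hUconn : IsConnected U)
    (hUcomp : IsCompact (closure U)) (hUΩ : closure U ⊆ Ω)
    (K : Set (EuclideanSpace ℝ (Fin 2)))
    (hK : K = {p ∈ closure U | X p = 0}) (hKU : K ⊆ U)
    (hess : ∃ ε > 0, ∀ X' : EuclideanSpace ℝ (Fin 2) → EuclideanSpace ℝ (Fin 2),
      ContinuousOn X' (closure U) → (∀ p ∈ closure U, ‖X' p - X p‖ < ε) →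
      ∃ p ∈ closure U, X' p = 0) :
    ∃ p ∈ K, Y p = 0 := by
  by_contra! hY0
  have hXc : ContinuousOn X (closure U) := hX.continuousOn.mono hUΩ
  have hYc : ContinuousOn Y (closure U) := hY.continuousOn.mono hUΩ
  have hKclosed : IsClosed K := by
    have := hXc.preimage_isClosed_of_isClosed isClosed_closure (isClosed_singleton (x := (0:E2)))
    rw [hK]; exact this
  have hKcl : K ⊆ closure U := by rw [hK]; exact fun p hp => hp.1
  have hKX : ∀ p ∈ K, X p = 0 := by rw [hK]; exact fun p hp => hp.2
  have hKc : IsCompact K := hUcomp.of_isClosed_subset hKclosed hKcl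
  have hnz : ∀ p ∈ K, ¬ ∀ᶠ q in 𝓝 p, X q = 0 := by
    intro p hp h0
    have h1 : EqOn X 0 U := (hX.mono (subset_closure.trans hUΩ)).eqOn_zero_of_preconnected_of_eventuallyEq_zero
      hUconn.isPreconnected (hKU hp) h0
    have h2 : EqOn X 0 (closure U) := by
      refine h1.of_subset_closure hXc continuousOn_const subset_closure subset_rfl
    have h3 : closure U ⊆ U := fun q hq => hKU (by rw [hK]; exact ⟨hq, h2 hq⟩)
    have h4 : IsClosed U := isClosed_of_closure_subset h3
    have h5 : U = univ := IsClopen.eq_univ ⟨h4, hUopen⟩ hUconn.nonempty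
    rw [h5, closure_univ] at hUcomp
    exact noncompact_univ E2 hUcomp
  have hKΩ : ∀ p ∈ K, p ∈ Ω := fun p hp => hUΩ (hKcl hp)
  have hTS : ∀ p ∈ K, Transv X Y p ∨ Paral X Y p := by
    intro p hp
    obtain ⟨z, hz0, hz⟩ :=
      (line_limit hΩ hX hY hf htrack (hKΩ p hp) (hY0 p hp) (hnz p hp)).2
    exact transv_or_paral (hY p (hKΩ p hp)).continuousAt hz0 hz
  set K1 : Set E2 := {p ∈ K | Transv X Y p} with hK1
  set K2 : Set E2 := {p ∈ K | Paral X Y p} with hK2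
  have hK1c : IsClosed K1 := by
    rw [← isOpen_compl_iff, isOpen_iff_mem_nhds]
    intro p hp
    by_cases hpK : p ∈ K
    · have hS : Paral X Y p := (hTS p hpK).resolve_left fun h => hp ⟨hpK, h⟩
      filter_upwards [paral_nhd hΩ hX hY hf htrack (hKΩ p hpK) (hY0 p hpK) (hnz p hpK) hS]
        with q hq hqK
      exact hq (hKX q hqK.1) (hnz q hqK.1) hqK.2
    · filter_upwards [hKclosed.isOpen_compl.mem_nhds hpK] with q hq hqK
      exact hq hqK.1
  have hK2c : IsClosed K2 := by
    rw [← isOpen_compl_iff, isOpen_iff_mem_nhds]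
    intro p hp
    by_cases hpK : p ∈ K
    · obtain ⟨c, hc, hT⟩ : Transv X Y p := (hTS p hpK).resolve_right fun h => hp ⟨hpK, h⟩
      filter_upwards [eventually_eventually_nhds.2 hT] with q hq hqK
      exact not_paral (hnz q hqK.1) ⟨c, hc, hq⟩ hqK.2
    · filter_upwards [hKclosed.isOpen_compl.mem_nhds hpK] with q hq hqK
      exact hq hqK.1
  have hdisj : Disjoint K1 K2 := by
    rw [Set.disjoint_left]
    exact fun p h1 h2 => not_paral (hnz p h1.1) h1.2 h2.2
  obtain ⟨δ, hδ, hdis⟩ := hdisj.exists_cthickenings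
    (hKc.of_isClosed_subset hK1c fun p hp => hp.1) hK2c
  obtain ⟨χ, hχ0, hχ1, -⟩ :=
    exists_continuous_zero_one_of_isClosed isClosed_cthickening isClosed_cthickening hdis
  have hmem : ∀ (A : Set E2), ∀ p ∈ A, cthickening δ A ∈ 𝓝 p := fun A p hp =>
    mem_of_superset (isOpen_thickening.mem_nhds (self_subset_thickening hδ A hp))
      (thickening_subset_cthickening δ A)
  set V : E2 → E2 := fun q => (1 - χ q) • Y q + χ q • rot (Y q) with hV
  have hVc : ContinuousOn V (closure U) :=
    ((continuousOn_const.sub χ.continuous.continuousOn).smul hYc).add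
      (χ.continuous.continuousOn.smul (continuous_rot.comp_continuousOn hYc))
  set N : Set E2 := {q | ∀ d : ℝ, d ≠ 0 → X q + d • V q ≠ 0} with hN
  have hNK : ∀ p ∈ K, N ∈ 𝓝 p := by
    intro p hp
    have hcY := (hY p (hKΩ p hp)).continuousAt
    have hYpos : 0 < ‖Y p‖ := norm_pos_iff.2 (hY0 p hp)
    have e1 : ∀ᶠ q in 𝓝 p, ‖Y p‖ / 2 < ‖Y q‖ :=
      hcY.norm.eventually_const_lt (half_lt_self hYpos)
    rcases hTS p hp with hT | hS
    · obtain ⟨c, hc, hT'⟩ := hT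
      filter_upwards [hT', e1, hmem K1 p ⟨hp, c, hc, hT'⟩] with q h1 h2 h3 d hd h0
      have hVq : V q = Y q := by simp [hV, hχ0 h3]
      rw [hVq] at h0
      have h4 : X q = (-d) • Y q := by rw [neg_smul]; exact eq_neg_of_add_eq_zero_left h0
      have h5 : det2 (X q) (Y q) = 0 := by
        rw [h4]; simp only [det2, PiLp.smul_apply, smul_eq_mul]; ring
      rw [h5, abs_zero, h4, norm_smul] at h1
      have h6 : 0 < ‖-d‖ := by simpa using hd
      have h7 : 0 < ‖Y q‖ := by linarith
      have : 0 < c * (‖-d‖ * ‖Y q‖) := by positivity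
      linarith
    · filter_upwards [hS (‖Y p‖ / 2) (by positivity), e1, hmem K2 p ⟨hp, hS⟩]
        with q h1 h2 h3 d hd h0
      have hVq : V q = rot (Y q) := by simp [hV, hχ1 h3]
      rw [hVq] at h0
      have h4 : X q = (-d) • rot (Y q) := by
        rw [neg_smul]; exact eq_neg_of_add_eq_zero_left h0
      have h5 : det2 (X q) (Y q) = d * ‖Y q‖ ^ 2 := by
        have : det2 (X q) (Y q) = (-d) * det2 (rot (Y q)) (Y q) := by
          rw [h4]; simp only [det2, PiLp.smul_apply, smul_eq_mul]; ring
        rw [this, det2_rot]; ring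
      rw [h5, h4, norm_smul, norm_rot, norm_neg, abs_mul, Real.norm_eq_abs,
        abs_of_nonneg (sq_nonneg ‖Y q‖)] at h1
      have h6 : 0 < |d| := abs_pos.2 hd
      have h7 : 0 < ‖Y q‖ := by linarith
      have h8 : 0 < |d| * ‖Y q‖ := by positivity
      nlinarith
  obtain ⟨ε, hε, hess⟩ := hess
  have hAc : IsCompact (closure U \ interior N) := hUcomp.diff isOpen_interior
  obtain ⟨c, hc, hcA⟩ := hAc.exists_forall_le' (f := fun q => ‖X q‖) (a := 0)
    ((hXc.mono sdiff_subset).norm) (fun q hq => by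
      refine norm_pos_iff.2 fun h0 => hq.2 ?_
      exact mem_interior_iff_mem_nhds.2 (hNK q (by rw [hK]; exact ⟨hq.1, h0⟩)))
  obtain ⟨M, hM⟩ := hUcomp.exists_bound_of_continuousOn hVc
  set d := min c ε / (|M| + 1) with hd
  have hd0 : 0 < d := by positivity
  have hdV : ∀ q ∈ closure U, ‖d • V q‖ < min c ε := by
    intro q hq
    rw [norm_smul, Real.norm_of_nonneg hd0.le]
    have h1 : ‖V q‖ < |M| + 1 := by linarith [hM q hq, le_abs_self M]
    calc d * ‖V q‖ < d * (|M| + 1) := by gcongr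
      _ = min c ε := by rw [hd]; field_simp
  obtain ⟨q, hq, hq0⟩ := hess (fun q => X q + d • V q)
    (hXc.add (hVc.const_smul d)) (fun q hq => by
      simpa using (hdV q hq).trans_le (min_le_right _ _))
  by_cases hqN : q ∈ interior N
  · exact interior_subset hqN d hd0.ne' hq0
  · have h1 := hcA q ⟨hq, hqN⟩
    have h2 : X q = - (d • V q) := eq_neg_of_add_eq_zero_left hq0
    have h3 := (hdV q hq).trans_le (min_le_left _ _)
    rw [h2, norm_neg] at h1
    linarith

/-- **Hirsch, Theorem 1.2 (real case, local form).**
If `Y` tracks `X` (both real-analytic on an open set `Ω ⊆ ℝ²`) and `K` is an essential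
`X`-block with connected isolating neighborhood `U`, then `Y` vanishes somewhere on `K`. -/
theorem zero_of_tracking_essential_block_real
    (Ω : Set (EuclideanSpace ℝ (Fin 2))) (hΩ : IsOpen Ω)
    (X Y : EuclideanSpace ℝ (Fin 2) → EuclideanSpace ℝ (Fin 2))
    (hX : AnalyticOnNhd ℝ X Ω) (hY : AnalyticOnNhd ℝ Y Ω)
    (f : EuclideanSpace ℝ (Fin 2) → ℝ) (hf : ContinuousOn f Ω)
    (htrack : ∀ p ∈ Ω, fderiv ℝ X p (Y p) - fderiv ℝ Y p (X p) = f p • X p)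
    (U : Set (EuclideanSpace ℝ (Fin 2))) (hUopen : IsOpen U) (hUconn : IsConnected U)
    (hUcomp : IsCompact (closure U)) (hUΩ : closure U ⊆ Ω)
    (K : Set (EuclideanSpace ℝ (Fin 2)))
    (hK : K = {p ∈ closure U | X p = 0}) (hKU : K ⊆ U)
    (hess : ∃ ε > 0, ∀ X' : EuclideanSpace ℝ (Fin 2) → EuclideanSpace ℝ (Fin 2),
      ContinuousOn X' (closure U) → (∀ p ∈ closure U, ‖X' p - X p‖ < ε) →
      ∃ p ∈ closure U, X' p = 0) :
    ∃ p ∈ K, Y p = 0 := by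
  exact HirschAux.main Ω hΩ X Y hX hY f hf htrack U hUopen hUconn hUcomp hUΩ K hK hKU hess
end

section
/- Let Ω ⊆ ℂ² be open and let X, Y : Ω → ℂ² be holomorphic (complex-analytic) vector fields. Assume Y tracks X over ℂ: there is a continuous function f : Ω → ℂ such that DX(p)(Y(p)) − DY(p)(X(p)) = f(p) • X(p) for all p ∈ Ω, where DX, DY denote the complex derivatives. Let U ⊆ Ω be a connected open set whose closure cl U is compact and contained in Ω, let K := {p ∈ cl U : X(p) = 0}, and assume K ⊆ U. Assume moreover that K is essential: there exists ε > 0 such that every continuous map X' : cl U → ℂ² with ‖X'(p) − X(p)‖ < ε for all p ∈ cl U has a zero in cl U. Then there exists p ∈ K with Y(p) = 0. -/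
open Set

section Helpers

open Filter Topology Metric
open scoped NNReal

variable {E : Type*} [NormedAddCommGroup E] [InnerProductSpace ℂ E] [CompleteSpace E]

/-- Cauchy estimate: a holomorphic map is locally bounded with locally bounded derivative. -/
theorem aux_local_bound {Ω : Set E} (hΩ : IsOpen Ω) {Z : E → E} (hZ : DifferentiableOn ℂ Z Ω)
    {p : E} (hp : p ∈ Ω) :
    ∃ r > 0, ∃ C : ℝ≥0, closedBall p r ⊆ Ω ∧
      ∀ q ∈ closedBall p r, ‖fderiv ℂ Z q‖ ≤ C ∧ ‖Z q‖ ≤ C := by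
  have hc : ContinuousAt Z p := (hZ.continuousOn).continuousAt (hΩ.mem_nhds hp)
  have h1 : ∀ᶠ q in 𝓝 p, ‖Z q‖ < ‖Z p‖ + 1 :=
    hc.norm.eventually (Iio_mem_nhds (by simp))
  obtain ⟨R, hR, hRb⟩ := Metric.eventually_nhds_iff_ball.1 (h1.and (hΩ.mem_nhds hp))
  set M : ℝ := ‖Z p‖ + 1 with hM
  have hM0 : 0 < M := by positivity
  set r := R / 4 with hr
  have hr0 : 0 < r := by positivity
  refine ⟨r, hr0, ⟨M + M / r, by positivity⟩, fun q hq => (hRb q ?_).2, fun q hq => ⟨?_, ?_⟩⟩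
  · rw [mem_closedBall] at hq
    rw [mem_ball]; linarith
  · rw [mem_closedBall] at hq
    refine ContinuousLinearMap.opNorm_le_bound _ (NNReal.coe_nonneg _) fun v => ?_
    change _ ≤ (M + M / r) * ‖v‖
    rcases eq_or_ne v 0 with rfl | hv
    · simp
    have hv0 : 0 < ‖v‖ := norm_pos_iff.2 hv
    have hmem : ∀ z ∈ closedBall (0 : ℂ) (r / ‖v‖), q + z • v ∈ ball p R := by
      intro z hz
      rw [mem_closedBall_zero_iff, le_div_iff₀ hv0] at hz
      rw [mem_ball]
      have h3 : dist (q + z • v) q ≤ r := by simpa [dist_eq_norm, norm_smul] using hz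
      have := dist_triangle (q + z • v) q p
      linarith
    have hd : ∀ z ∈ closedBall (0 : ℂ) (r / ‖v‖),
        HasDerivAt (fun z : ℂ => Z (q + z • v)) (fderiv ℂ Z (q + z • v) v) z := by
      intro z hz
      have h4 := (hZ.differentiableAt (hΩ.mem_nhds (hRb _ (hmem z hz)).2)).hasFDerivAt
      have h5 : HasDerivAt (fun z : ℂ => q + z • v) v z := by
        simpa using ((hasDerivAt_id z).smul_const v).const_add q
      exact h4.comp_hasDerivAt z h5
    have hrv : 0 < r / ‖v‖ := by positivity
    have hdc : DiffContOnCl ℂ (fun z : ℂ => Z (q + z • v)) (ball 0 (r / ‖v‖)) := by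
      refine DifferentiableOn.diffContOnCl_ball (U := closedBall 0 (r / ‖v‖)) ?_ subset_rfl
      exact fun z hz => (hd z hz).differentiableAt.differentiableWithinAt
    have h6 := Complex.norm_deriv_le_of_forall_mem_sphere_norm_le hrv hdc
      (fun z hz => (hRb _ (hmem z (sphere_subset_closedBall hz))).1.le)
    rw [(hd 0 (mem_closedBall_self hrv.le)).deriv, zero_smul, add_zero] at h6
    have h7 : M / (r / ‖v‖) = M / r * ‖v‖ := by field_simp
    rw [h7] at h6
    nlinarith [mul_pos hM0 hv0]
  · have : ‖Z q‖ < M := (hRb q (by rw [mem_closedBall] at hq; rw [mem_ball]; linarith)).1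
    have h2 : 0 < M / r := by positivity
    change ‖Z q‖ ≤ M + M / r
    linarith

theorem aux_flow {Ω : Set E} (hΩ : IsOpen Ω) {X Z : E → E} {f : E → ℂ}
    (hX : DifferentiableOn ℂ X Ω) (hZ : DifferentiableOn ℂ Z Ω) (hf : ContinuousOn f Ω)
    (htrack : ∀ p ∈ Ω, fderiv ℂ X p (Z p) - fderiv ℂ Z p (X p) = f p • X p)
    {p : E} (hp : p ∈ Ω) (hXp : X p = 0) :
    ∃ γ : ℝ → E, γ 0 = p ∧ ∀ᶠ t in 𝓝 (0 : ℝ), HasDerivAt γ (Z (γ t)) t ∧ X (γ t) = 0 := by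
  obtain ⟨r, hr, C, hsub, hC⟩ := aux_local_bound hΩ hZ hp
  have hlip : LipschitzOnWith C Z (closedBall p r) :=
    (convex_closedBall p r).lipschitzOnWith_of_nnnorm_fderiv_le (𝕜 := ℂ)
      (fun x hx => hZ.differentiableAt (hΩ.mem_nhds (hsub hx)))
      (fun x hx => (hC x hx).1)
  set ε : ℝ := r / (C + 1) with hε
  have hε0 : 0 < ε := by positivity
  have hPL : IsPicardLindelof (fun _ => Z) (tmin := 0 - ε) (tmax := 0 + ε)
      ⟨0, by simp [hε0.le]⟩ p ⟨r, hr.le⟩ 0 C C := by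
    refine IsPicardLindelof.of_time_independent (fun x hx => (hC x hx).2) hlip ?_
    have : (C : ℝ) * ε ≤ r := by
      rw [hε, mul_div_assoc', div_le_iff₀ (by positivity)]
      nlinarith [C.2]
    simp only [zero_add, sub_zero, zero_sub, sub_neg_eq_add, max_self, NNReal.coe_zero]
    exact this
  obtain ⟨γ, hγ0, hγ⟩ := hPL.exists_eq_forall_mem_Icc_hasDerivWithinAt₀
  have hγ0 : γ 0 = p := hγ0
  have hder : ∀ᶠ t in 𝓝 (0 : ℝ), HasDerivAt γ (Z (γ t)) t := by
    filter_upwards [Ioo_mem_nhds (show 0 - ε < 0 by linarith) (show 0 < 0 + ε by linarith)]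
      with t ht
    exact (hγ t (Ioo_subset_Icc_self ht)).hasDerivAt (Icc_mem_nhds ht.1 ht.2)
  have hcont : ContinuousAt γ 0 := hder.self_of_nhds.continuousAt
  have hcont' : Tendsto γ (𝓝 0) (𝓝 p) := by rw [← hγ0]; exact hcont
  have hball : ∀ᶠ t in 𝓝 (0 : ℝ), γ t ∈ closedBall p r :=
    hcont'.eventually (closedBall_mem_nhds p hr)
  have hfb : ∀ᶠ t in 𝓝 (0 : ℝ), ‖f (γ t)‖ < ‖f p‖ + 1 :=
    hcont'.eventually (((hf.continuousAt (hΩ.mem_nhds hp)).norm).eventually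
      (Iio_mem_nhds (by simp)))
  refine ⟨γ, hγ0, ?_⟩
  have key : (fun t => X (γ t)) =ᶠ[𝓝 (0:ℝ)] (fun _ => (0 : E)) := by
    refine ODE_solution_unique_of_eventually (K := C + (‖f p‖₊ + 1))
      (v := fun t x => fderiv ℂ Z (γ t) x + f (γ t) • x) (s := fun _ => univ) ?_ ?_ ?_ ?_
    · filter_upwards [hball, hfb] with t h1 h2
      refine LipschitzWith.lipschitzOnWith ?_
      refine LipschitzWith.add ?_ ?_
      · exact (fderiv ℂ Z (γ t)).lipschitz.weaken (hC _ h1).1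
      · exact (lipschitzWith_smul (f (γ t))).weaken h2.le
    · filter_upwards [hball, hder] with t h1 h2
      refine ⟨?_, mem_univ _⟩
      have hXd := (hX.differentiableAt (hΩ.mem_nhds (hsub h1))).hasFDerivAt
      have := (hXd.restrictScalars ℝ).comp_hasDerivAt t h2
      have e := htrack _ (hsub h1)
      rw [sub_eq_iff_eq_add] at e
      have e2 : fderiv ℂ Z (γ t) (X (γ t)) + f (γ t) • X (γ t) = fderiv ℂ X (γ t) (Z (γ t)) := by
        rw [e, add_comm]
      change HasDerivAt (fun t => X (γ t)) (fderiv ℂ Z (γ t) (X (γ t)) + f (γ t) • X (γ t)) t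
      rw [e2]
      exact this
    · filter_upwards with t
      refine ⟨?_, mem_univ _⟩
      simpa using hasDerivAt_const t (0 : E)
    · simp [hγ0, hXp]
  filter_upwards [hder, key] with t h1 h2
  exact ⟨h1, h2⟩

theorem aux_second {Ω : Set E} (hΩ : IsOpen Ω) {X Z : E → E} {f : E → ℂ}
    (hX : DifferentiableOn ℂ X Ω) (hZ : DifferentiableOn ℂ Z Ω) (hf : ContinuousOn f Ω)
    (htrack : ∀ p ∈ Ω, fderiv ℂ X p (Z p) - fderiv ℂ Z p (X p) = f p • X p)
    {p : E} (hp : p ∈ Ω) (hXp : X p = 0) (hmax : ∀ᶠ q in 𝓝 p, X q = 0 → ‖q‖ ≤ ‖p‖) :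
    ‖Z p‖ ^ 2 + (inner ℂ p (fderiv ℂ Z p (Z p))).re ≤ 0 := by
  obtain ⟨γ, hγ0, hγ⟩ := aux_flow hΩ hX hZ hf htrack hp hXp
  have hd0 := hγ.self_of_nhds.1
  have hcont' : Tendsto γ (𝓝 0) (𝓝 p) := by
    have := hd0.continuousAt; rw [← hγ0]; exact this
  set h : ℝ → ℝ := fun t => ‖γ t‖ ^ 2 with hh
  have hhe : h = fun t => (inner ℂ (γ t) (γ t)).re := by
    funext t
    exact (inner_self_eq_norm_sq (𝕜 := ℂ) (γ t)).symm
  have hloc : IsLocalMax h 0 := by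
    filter_upwards [hγ, hcont'.eventually hmax] with t h1 h2
    have := h2 h1.2
    simp only [hh, hγ0]
    gcongr
  have hd : ∀ᶠ t in 𝓝 (0 : ℝ), HasDerivAt h (2 * (inner ℂ (γ t) (Z (γ t))).re) t := by
    filter_upwards [hγ] with t h1
    rw [hhe]
    have := Complex.reCLM.hasFDerivAt.comp_hasDerivAt t (h1.1.inner ℂ h1.1)
    refine HasDerivAt.congr_deriv this ?_
    simp only [Complex.reCLM_apply, Complex.add_re]
    rw [← inner_conj_symm (Z (γ t)) (γ t), Complex.conj_re]; ring
  have hderiv : deriv h =ᶠ[𝓝 0] fun t => 2 * (inner ℂ (γ t) (Z (γ t))).re := by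
    filter_upwards [hd] with t ht using ht.deriv
  have hZd : HasDerivAt (fun t => Z (γ t)) (fderiv ℂ Z p (Z p)) 0 := by
    have hZd := (hZ.differentiableAt (hΩ.mem_nhds hp)).hasFDerivAt
    rw [← hγ0] at hZd
    have := (hZd.restrictScalars ℝ).comp_hasDerivAt (0:ℝ) hd0
    rw [hγ0] at this
    exact this
  have hdd : deriv (deriv h) 0 =
      2 * (‖Z p‖ ^ 2 + (inner ℂ p (fderiv ℂ Z p (Z p))).re) := by
    rw [hderiv.deriv_eq]
    have := (Complex.reCLM.hasFDerivAt.comp_hasDerivAt (0:ℝ) (hd0.inner ℂ hZd)).const_mul (2:ℝ)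
    have e := this.deriv
    simp only [hγ0] at e
    refine e.trans ?_
    simp only [Complex.reCLM_apply, Complex.add_re]
    have e2 : (inner ℂ (Z p) (Z p)).re = ‖Z p‖ ^ 2 := inner_self_eq_norm_sq (𝕜 := ℂ) (Z p)
    rw [e2, add_comm]
  by_contra hcon
  push Not at hcon
  have hpos : deriv (deriv h) 0 > 0 := by rw [hdd]; linarith
  have hmin := isLocalMin_of_deriv_deriv_pos hpos hloc.deriv_eq_zero hd.self_of_nhds.continuousAt
  have hconst : h =ᶠ[𝓝 0] fun _ => h 0 := by
    filter_upwards [hloc, hmin] with t h1 h2 using le_antisymm h1 h2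
  have : deriv (deriv h) 0 = 0 := by
    rw [hconst.deriv.deriv_eq]; simp
  linarith

theorem aux_zero {Ω : Set E} (hΩ : IsOpen Ω) {X Z : E → E} {f : E → ℂ}
    (hX : DifferentiableOn ℂ X Ω) (hZ : DifferentiableOn ℂ Z Ω) (hf : ContinuousOn f Ω)
    (htrack : ∀ p ∈ Ω, fderiv ℂ X p (Z p) - fderiv ℂ Z p (X p) = f p • X p)
    {p : E} (hp : p ∈ Ω) (hXp : X p = 0) (hmax : ∀ᶠ q in 𝓝 p, X q = 0 → ‖q‖ ≤ ‖p‖) :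
    Z p = 0 := by
  have h1 := aux_second hΩ hX hZ hf htrack hp hXp hmax
  have hfd : ∀ q ∈ Ω, fderiv ℂ (fun x => Complex.I • Z x) q = Complex.I • fderiv ℂ Z q :=
    fun q hq => fderiv_fun_const_smul (hZ.differentiableAt (hΩ.mem_nhds hq)) Complex.I
  have h2 := aux_second (Z := fun x => Complex.I • Z x) (f := fun x => Complex.I * f x)
    hΩ hX (hZ.const_smul Complex.I) (continuousOn_const.mul hf) (by
      intro q hq
      rw [hfd q hq]
      simp only [map_smul, smul_apply, ← smul_sub, htrack q hq, mul_smul])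
    hp hXp hmax
  rw [hfd p hp] at h2
  simp only [map_smul, smul_apply, smul_smul, Complex.I_mul_I, norm_smul,
    Complex.norm_I, one_mul, neg_smul, one_smul, inner_neg_right, Complex.neg_re] at h2
  have : ‖Z p‖ ^ 2 ≤ 0 := by linarith
  have h3 : ‖Z p‖ = 0 := by nlinarith [norm_nonneg (Z p)]
  exact norm_eq_zero.1 h3

end Helpers

/-- **Hirsch, Theorem 1.2 (complex case, local form).**
If `Y` tracks `X` (both holomorphic on an open set `Ω ⊆ ℂ²`) and `K` is an essential
`X`-block with connected isolating neighborhood `U`, then `Y` vanishes somewhere on `K`. -/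
theorem zero_of_tracking_essential_block_complex
    (Ω : Set (EuclideanSpace ℂ (Fin 2))) (hΩ : IsOpen Ω)
    (X Y : EuclideanSpace ℂ (Fin 2) → EuclideanSpace ℂ (Fin 2))
    (hX : DifferentiableOn ℂ X Ω) (hY : DifferentiableOn ℂ Y Ω)
    (f : EuclideanSpace ℂ (Fin 2) → ℂ) (hf : ContinuousOn f Ω)
    (htrack : ∀ p ∈ Ω, fderiv ℂ X p (Y p) - fderiv ℂ Y p (X p) = f p • X p)
    (U : Set (EuclideanSpace ℂ (Fin 2))) (hUopen : IsOpen U) (hUconn : IsConnected U)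
    (hUcomp : IsCompact (closure U)) (hUΩ : closure U ⊆ Ω)
    (K : Set (EuclideanSpace ℂ (Fin 2)))
    (hK : K = {p ∈ closure U | X p = 0}) (hKU : K ⊆ U)
    (hess : ∃ ε > 0, ∀ X' : EuclideanSpace ℂ (Fin 2) → EuclideanSpace ℂ (Fin 2),
      ContinuousOn X' (closure U) → (∀ p ∈ closure U, ‖X' p - X p‖ < ε) →
      ∃ p ∈ closure U, X' p = 0) :
    ∃ p ∈ K, Y p = 0 := by
  obtain ⟨ε, hε, hess⟩ := hess
  obtain ⟨p₀, hp₀, hXp₀⟩ := hess X (hX.continuousOn.mono hUΩ) (fun p _ => by simpa using hε)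
  have hKc : IsCompact K := by
    have hcl : IsClosed (closure U ∩ X ⁻¹' {0}) :=
      (hX.continuousOn.mono hUΩ).preimage_isClosed_of_isClosed isClosed_closure isClosed_singleton
    have : K = closure U ∩ X ⁻¹' {0} := by rw [hK]; rfl
    rw [this]
    exact hUcomp.of_isClosed_subset hcl inter_subset_left
  have hKne : K.Nonempty := ⟨p₀, by rw [hK]; exact ⟨hp₀, hXp₀⟩⟩
  obtain ⟨p, hpK, hpmax⟩ := hKc.exists_isMaxOn hKne continuous_norm.continuousOn
  have hp : p ∈ closure U ∧ X p = 0 := by rw [hK] at hpK; exact hpK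
  refine ⟨p, hpK, aux_zero hΩ hX hY hf htrack (hUΩ hp.1) hp.2 ?_⟩
  filter_upwards [hUopen.mem_nhds (hKU hpK)] with q hq hXq
  exact hpmax (by rw [hK]; exact ⟨subset_closure hq, hXq⟩)
end

section
/- Let Ω ⊆ ℝ² be open and let X : Ω → ℝ² be a real-analytic vector field. Let U ⊆ Ω be a connected open set whose closure cl U is compact and contained in Ω, let K := {p ∈ cl U : X(p) = 0}, assume K ⊆ U, and assume K is essential: there exists ε > 0 such that every continuous map X' : cl U → ℝ² with ‖X'(p) − X(p)‖ < ε for all p ∈ cl U has a zero in cl U. Let Y₁, …, Y_d : Ω → ℝ² be real-analytic vector fields such that: (1) each Y_i tracks X, i.e. there are continuous f_i : Ω → ℝ with DX(p)(Y_i(p)) − DY_i(p)(X(p)) = f_i(p) • X(p) for all p; and (2) for all indices 1 ≤ i ≤ d and 1 ≤ j ≤ k ≤ d, the bracket [Y_i, Y_j](p) = DY_j(p)(Y_i(p)) − DY_i(p)(Y_j(p)) is a real linear combination of Y₁, …, Y_k, i.e. there exist constants c_{ijk,m} ∈ ℝ (1 ≤ m ≤ k) with [Y_i, Y_j] = Σ_{m=1}^{k}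 c_{ijk,m} • Y_m as functions on Ω. Then there exists p ∈ K with Y_i(p) = 0 for all i = 1, …, d. -/
open Set

namespace Hirsch

open Filter Topology

abbrev E2 := EuclideanSpace ℝ (Fin 2)

/-- determinant of two plane vectors -/
def dt (u v : E2) : ℝ := u 0 * v 1 - u 1 * v 0

/-- rotation by a right angle -/
noncomputable def J (v : E2) : E2 := !₂[-v 1, v 0]

lemma gron {F : Type*} [NormedAddCommGroup F] [NormedSpace ℝ F] {g g' : ℝ → F} {C a b : ℝ}
    (hg : ∀ t ∈ uIcc a b, HasDerivAt g (g' t) t)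
    (hb : ∀ t ∈ uIcc a b, ‖g' t‖ ≤ C * ‖g t‖) :
    ‖g b‖ ≤ ‖g a‖ * Real.exp (C * |b - a|) := by
  rcases le_total a b with hab | hab
  · rw [uIcc_of_le hab] at hg hb
    have := norm_le_gronwallBound_of_norm_deriv_right_le (f := g) (f' := g') (δ := ‖g a‖) (K := C)
      (ε := 0) (a := a) (b := b) (fun t ht => (hg t ht).continuousAt.continuousWithinAt)
      (fun t ht => (hg t (Ico_subset_Icc_self ht)).hasDerivWithinAt) le_rfl
      (fun t ht => by simpa using hb t (Ico_subset_Icc_self ht)) b ⟨hab, le_rfl⟩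
    rwa [gronwallBound_ε0, ← abs_of_nonneg (sub_nonneg.2 hab)] at this
  · rw [uIcc_of_ge hab] at hg hb
    have := norm_le_gronwallBound_of_norm_deriv_right_le (f := fun t => g (-t))
      (f' := fun t => -g' (-t)) (δ := ‖g a‖) (K := C)
      (ε := 0) (a := -a) (b := -b)
      (fun t ht => by
        have h := (hg (-t) ⟨by linarith [ht.2], by linarith [ht.1]⟩).continuousAt
        exact (h.comp (f := fun t : ℝ => -t) continuousAt_neg).continuousWithinAt)
      (fun t ht => by
        have h := (hg (-t) ⟨by linarith [ht.2], by linarith [ht.1]⟩)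
        have h2 := h.scomp t (hasDerivAt_neg t)
        simpa [Function.comp_def] using h2.hasDerivWithinAt) (by simp)
      (fun t ht => by simpa using hb (-t) ⟨by linarith [ht.2], by linarith [ht.1]⟩)
      (-b) ⟨by linarith, le_rfl⟩
    rw [gronwallBound_ε0] at this
    rw [abs_of_nonpos (sub_nonpos.2 hab)]
    simpa [neg_sub, sub_eq_add_neg, add_comm] using this

lemma flow {Y : E2 → E2} {p : E2} (hY : ContDiffAt ℝ 1 Y p) {W : Set E2} (hW : W ∈ 𝓝 p) :
    ∃ T > (0 : ℝ), T ≤ 1 ∧ ∃ r > (0 : ℝ), ∃ α : E2 × ℝ → E2,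
      ContinuousOn α (Metric.closedBall p r ×ˢ Icc (-T) T) ∧
      ∀ x ∈ Metric.closedBall p r, α (x, 0) = x ∧ ∀ t ∈ Icc (-T) T,
        HasDerivAt (fun t => α (x, t)) (Y (α (x, t))) t ∧ α (x, t) ∈ W := by
  obtain ⟨ε, hε, a, r, L, K, hr, hpl⟩ := IsPicardLindelof.of_contDiffAt_one hY
  obtain ⟨α, h1, h2⟩ := (hpl 0).exists_forall_mem_closedBall_eq_hasDerivWithinAt_continuousOn
  have hr' : (0 : ℝ) < r := hr
  have hn : Metric.closedBall p (r : ℝ) ×ˢ Icc (0 - ε) (0 + ε) ∈ 𝓝 (p, (0 : ℝ)) :=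
    prod_mem_nhds (Metric.closedBall_mem_nhds p hr') (Icc_mem_nhds (by linarith) (by linarith))
  have hc : ContinuousAt α (p, 0) := h2.continuousAt hn
  have h0 : α (p, 0) = p := (h1 p (Metric.mem_closedBall_self hr'.le)).1
  have hW' : α ⁻¹' W ∈ 𝓝 (p, (0 : ℝ)) := hc (by rwa [h0])
  obtain ⟨δ, hδ, hδW⟩ := Metric.mem_nhds_iff.1 hW'
  refine ⟨min (min (ε / 2) (δ / 2)) 1, by positivity, min_le_right _ _, min r (δ / 2),
    by positivity, α, ?_, ?_⟩
  · refine h2.mono (prod_mono (Metric.closedBall_subset_closedBall (min_le_left _ _)) ?_)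
    have h3 : min (min (ε / 2) (δ / 2)) 1 ≤ ε / 2 := (min_le_left _ _).trans (min_le_left _ _)
    exact Icc_subset_Icc (by linarith) (by linarith)
  · intro x hx
    have hx1 : x ∈ Metric.closedBall p (r : ℝ) :=
      Metric.closedBall_subset_closedBall (min_le_left _ _) hx
    refine ⟨(h1 x hx1).1, fun t ht => ?_⟩
    have h3 : min (min (ε / 2) (δ / 2)) 1 ≤ ε / 2 := (min_le_left _ _).trans (min_le_left _ _)
    have h4 : min (min (ε / 2) (δ / 2)) 1 ≤ δ / 2 := (min_le_left _ _).trans (min_le_right _ _)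
    have h5 : min (r : ℝ) (δ / 2) ≤ δ / 2 := min_le_right _ _
    refine ⟨((h1 x hx1).2 t ⟨by linarith [ht.1], by linarith [ht.2]⟩).hasDerivAt
      (Icc_mem_nhds (by linarith [ht.1]) (by linarith [ht.2])), ?_⟩
    apply hδW
    rw [Metric.mem_ball, Prod.dist_eq, max_lt_iff]
    have h6 : dist x p ≤ _ := hx
    constructor
    · simp only; linarith
    · simp only [Real.dist_eq, sub_zero]
      exact (abs_le.2 ht).trans_lt (by linarith)

lemma dt_abs_le (u v : E2) : |dt u v| ≤ 2 * ‖u‖ * ‖v‖ := by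
  have h := fun (u : E2) i => PiLp.norm_apply_le u i
  have h1 := h u 0
  have h2 := h u 1
  have h3 := h v 0
  have h4 := h v 1
  rw [Real.norm_eq_abs] at h1 h2 h3 h4
  unfold dt
  calc |u 0 * v 1 - u 1 * v 0| ≤ |u 0 * v 1| + |u 1 * v 0| := abs_sub _ _
    _ = |u 0| * |v 1| + |u 1| * |v 0| := by rw [abs_mul, abs_mul]
    _ ≤ ‖u‖ * ‖v‖ + ‖u‖ * ‖v‖ := by gcongr
    _ = _ := by ring

lemma dt_trace (A : E2 →L[ℝ] E2) (u v : E2) :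
    |dt (A u) v + dt u (A v)| ≤ 2 * ‖A‖ * |dt u v| := by
  have key : ∀ u : E2, A u = u 0 • A (EuclideanSpace.single 0 1) + u 1 • A (EuclideanSpace.single 1 1) := by
    intro u
    rw [← map_smul, ← map_smul, ← map_add]
    congr 1
    ext i; fin_cases i <;> simp
  set a := A (EuclideanSpace.single 0 1) with ha
  set b := A (EuclideanSpace.single 1 1) with hb
  have e : dt (A u) v + dt u (A v) = (a 0 + b 1) * dt u v := by
    rw [key u, key v]; simp [dt]; ring
  have h1 : |a 0| ≤ ‖A‖ := by
    have := A.le_opNorm (EuclideanSpace.single 0 1)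
    have h2 := PiLp.norm_apply_le a 0
    rw [← ha] at this
    simp at this h2; linarith
  have h2 : |b 1| ≤ ‖A‖ := by
    have := A.le_opNorm (EuclideanSpace.single 1 1)
    have h2 := PiLp.norm_apply_le b 1
    rw [← hb] at this
    simp at this h2; linarith
  rw [e, abs_mul]
  gcongr
  exact (abs_add_le _ _).trans (by linarith)

lemma hasDerivAt_dt {u v : ℝ → E2} {u' v' : E2} {t : ℝ} (hu : HasDerivAt u u' t)
    (hv : HasDerivAt v v' t) :
    HasDerivAt (fun t => dt (u t) (v t)) (dt u' (v t) + dt (u t) v') t := by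
  have c : ∀ {u : ℝ → E2} {u' : E2} (i : Fin 2), HasDerivAt u u' t →
      HasDerivAt (fun t => u t i) (u' i) t := fun i h =>
    (EuclideanSpace.proj (𝕜 := ℝ) i).hasFDerivAt.comp_hasDerivAt t h
  have := ((c 0 hu).mul (c 1 hv)).sub ((c 1 hu).mul (c 0 hv))
  exact this.congr_deriv (by unfold dt; ring)

lemma perp {u y : E2} (hy : y ≠ 0) (h : inner ℝ u y = 0) : ∃ s : ℝ, u = s • J y ∧ |s| * ‖y‖ = ‖u‖ := by
  have hn : ‖y‖ ^ 2 = y 0 ^ 2 + y 1 ^ 2 := by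
    rw [EuclideanSpace.real_norm_sq_eq, Fin.sum_univ_two]
  have hp : 0 < ‖y‖ ^ 2 := by positivity
  have hi : u 0 * y 0 + u 1 * y 1 = 0 := by
    simp [PiLp.inner_apply, Fin.sum_univ_two] at h; linarith
  have hJ : ‖J y‖ = ‖y‖ := by
    rw [← sq_eq_sq₀ (norm_nonneg _) (norm_nonneg _), hn, EuclideanSpace.real_norm_sq_eq, Fin.sum_univ_two]
    simp [J]; ring
  have e : u = ((u 1 * y 0 - u 0 * y 1) / ‖y‖ ^ 2) • J y := by
    ext i
    fin_cases i
    · simp [J]; field_simp; rw [hn]; linear_combination (y 0) * hi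
    · simp [J]; field_simp; rw [hn]; linear_combination (y 1) * hi
  refine ⟨_, e, ?_⟩
  conv_rhs => rw [e, norm_smul, hJ, Real.norm_eq_abs]


/-- two points at which `X` and `X ∧ Y` are comparable -/
def Cmp (X Y : E2 → E2) (M : ℝ) (q q' : E2) : Prop :=
  ‖X q‖ ≤ M * ‖X q'‖ ∧ ‖X q'‖ ≤ M * ‖X q‖ ∧
  |dt (X q) (Y q)| ≤ M * |dt (X q') (Y q')| ∧ |dt (X q') (Y q')| ≤ M * |dt (X q) (Y q)|

lemma cmp_curve {Ω : Set E2} {X Y : E2 → E2} {f : E2 → ℝ} (hX : AnalyticOnNhd ℝ X Ω)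
    (hY : AnalyticOnNhd ℝ Y Ω)
    (htr : ∀ p ∈ Ω, fderiv ℝ X p (Y p) - fderiv ℝ Y p (X p) = f p • X p)
    {L : ℝ} {γ : ℝ → E2} {t₀ : ℝ} (ht : |t₀| ≤ 1)
    (hγ : ∀ t ∈ uIcc 0 t₀, HasDerivAt γ (Y (γ t)) t ∧ γ t ∈ Ω ∧ ‖fderiv ℝ Y (γ t)‖ ≤ L ∧ |f (γ t)| ≤ L) :
    Cmp X Y (Real.exp (3 * L)) (γ 0) (γ t₀) := by
  have hL : 0 ≤ L := (abs_nonneg _).trans (hγ 0 left_mem_uIcc).2.2.2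
  have hXd : ∀ t ∈ uIcc 0 t₀, HasDerivAt (fun t => X (γ t))
      (fderiv ℝ Y (γ t) (X (γ t)) + f (γ t) • X (γ t)) t := by
    intro t h
    obtain ⟨h1, h2, -⟩ := hγ t h
    have := (hX _ h2).differentiableAt.hasFDerivAt.comp_hasDerivAt t h1
    rw [← htr _ h2, add_sub_cancel]
    exact this
  have hYd : ∀ t ∈ uIcc 0 t₀, HasDerivAt (fun t => Y (γ t))
      (fderiv ℝ Y (γ t) (Y (γ t))) t := by
    intro t h
    obtain ⟨h1, h2, -⟩ := hγ t h
    exact (hY _ h2).differentiableAt.hasFDerivAt.comp_hasDerivAt t h1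
  have hwd := fun t h => hasDerivAt_dt (hXd t h) (hYd t h)
  have bX : ∀ t ∈ uIcc 0 t₀,
      ‖fderiv ℝ Y (γ t) (X (γ t)) + f (γ t) • X (γ t)‖ ≤ (3 * L) * ‖X (γ t)‖ := by
    intro t h
    obtain ⟨-, -, h3, h4⟩ := hγ t h
    calc _ ≤ ‖fderiv ℝ Y (γ t)‖ * ‖X (γ t)‖ + |f (γ t)| * ‖X (γ t)‖ := by
          refine (norm_add_le _ _).trans (add_le_add (ContinuousLinearMap.le_opNorm _ _) ?_)
          rw [norm_smul, Real.norm_eq_abs]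
      _ ≤ L * ‖X (γ t)‖ + L * ‖X (γ t)‖ := by gcongr
      _ ≤ _ := by nlinarith [mul_nonneg hL (norm_nonneg (X (γ t)))]
  have bw : ∀ t ∈ uIcc 0 t₀,
      ‖dt (fderiv ℝ Y (γ t) (X (γ t)) + f (γ t) • X (γ t)) (Y (γ t)) +
        dt (X (γ t)) (fderiv ℝ Y (γ t) (Y (γ t)))‖ ≤ (3 * L) * ‖dt (X (γ t)) (Y (γ t))‖ := by
    intro t h
    obtain ⟨-, -, h3, h4⟩ := hγ t h
    have h5 := dt_trace (fderiv ℝ Y (γ t)) (X (γ t)) (Y (γ t))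
    have e : dt (fderiv ℝ Y (γ t) (X (γ t)) + f (γ t) • X (γ t)) (Y (γ t)) +
        dt (X (γ t)) (fderiv ℝ Y (γ t) (Y (γ t))) =
        (dt (fderiv ℝ Y (γ t) (X (γ t))) (Y (γ t)) +
        dt (X (γ t)) (fderiv ℝ Y (γ t) (Y (γ t)))) + f (γ t) * dt (X (γ t)) (Y (γ t)) := by
      simp [dt]; ring
    rw [e, Real.norm_eq_abs, Real.norm_eq_abs]
    refine (abs_add_le _ _).trans ?_
    rw [abs_mul]
    calc _ ≤ 2 * L * |dt (X (γ t)) (Y (γ t))| + L * |dt (X (γ t)) (Y (γ t))| := by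
          refine add_le_add (h5.trans ?_) ?_ <;> gcongr
      _ = _ := by ring
  have hexp : Real.exp (3 * L * |t₀|) ≤ Real.exp (3 * L) := by
    apply Real.exp_le_exp.2; nlinarith
  have fin : ∀ {a b : ℝ}, 0 ≤ a → b ≤ a * Real.exp (3 * L * |t₀|) → b ≤ Real.exp (3 * L) * a := by
    intro a b ha h
    rw [mul_comm]
    exact h.trans (by gcongr)
  have hXd' := hXd
  have bX' := bX
  have hwd' := hwd
  have bw' := bw
  rw [uIcc_comm] at hXd' bX' hwd' bw'
  refine ⟨?_, ?_, ?_, ?_⟩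
  · have := gron hXd' bX'
    rw [zero_sub, abs_neg] at this
    exact fin (norm_nonneg _) this
  · have := gron hXd bX
    rw [sub_zero] at this
    exact fin (norm_nonneg _) this
  · have := gron hwd' bw'
    rw [zero_sub, abs_neg] at this
    exact fin (abs_nonneg _) this
  · have := gron hwd bw
    rw [sub_zero] at this
    exact fin (abs_nonneg _) this

lemma local_lem {Ω : Set E2} (hΩ : IsOpen Ω) {X Y : E2 → E2} {f : E2 → ℝ}
    (hX : AnalyticOnNhd ℝ X Ω)
    (hY : AnalyticOnNhd ℝ Y Ω) (hf : ContinuousOn f Ω)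
    (htr : ∀ p ∈ Ω, fderiv ℝ X p (Y p) - fderiv ℝ Y p (X p) = f p • X p)
    {p : E2} (hp : p ∈ Ω) (hYp : Y p ≠ 0) :
    ∃ M > (0 : ℝ), ∀ δ > (0 : ℝ), ∀ᶠ q in 𝓝 p, ∃ s : ℝ, |s| < δ ∧
      ∃ (h : E2 → E2) (γ : ℝ → E2) (t₀ : ℝ), h q = p + s • J (Y p) ∧ ContinuousAt h q ∧
        (∀ᶠ q' in 𝓝 q, Cmp X Y M q' (h q')) ∧ γ 0 = q ∧ γ t₀ = h q ∧
        ∀ t ∈ uIcc 0 t₀, HasDerivAt γ (Y (γ t)) t ∧ γ t ∈ Ω := by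
  set L := ‖fderiv ℝ Y p‖ + |f p| + 1 with hL
  refine ⟨Real.exp (3 * L), Real.exp_pos _, fun δ hδ => ?_⟩
  have hyp : 0 < ‖Y p‖ := norm_pos_iff.2 hYp
  have hW : ∀ᶠ x in 𝓝 p, (x ∈ Ω ∧ ‖fderiv ℝ Y x‖ ≤ L ∧ |f x| ≤ L) ∧
      ‖x - p‖ < δ * ‖Y p‖ ∧ ‖Y p‖ ^ 2 / 2 ≤ inner ℝ (Y x) (Y p) := by
    have h1 : ContinuousAt (fun x => ‖fderiv ℝ Y x‖) p := (hY p hp).fderiv.continuousAt.norm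
    have h2 : ContinuousAt (fun x => |f x|) p := (hf.continuousAt (hΩ.mem_nhds hp)).abs
    have h3 : ContinuousAt (fun x => ‖x - p‖) p := by fun_prop
    have h4 : ContinuousAt (fun x => inner ℝ (Y x) (Y p)) p :=
      (hY p hp).continuousAt.inner continuousAt_const
    have h5 : ‖Y p‖ ^ 2 / 2 < inner ℝ (Y p) (Y p) := by
      rw [real_inner_self_eq_norm_sq]; nlinarith
    filter_upwards [hΩ.mem_nhds hp,
      h1.eventually_lt_const (show ‖fderiv ℝ Y p‖ < L by rw [hL]; linarith [abs_nonneg (f p)]),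
      h2.eventually_lt_const (show |f p| < L by rw [hL]; linarith [norm_nonneg (fderiv ℝ Y p)]),
      h3.eventually_lt_const (show ‖p - p‖ < δ * ‖Y p‖ by rw [sub_self, norm_zero]; positivity),
      h4.eventually_const_lt h5] with x a1 a2 a3 a4 a5
    exact ⟨⟨a1, a2.le, a3.le⟩, a4, a5.le⟩
  obtain ⟨T, hT, hT1, r, hr, α, hαc, hα⟩ := flow (hY p hp).contDiffAt hW
  have hcont : ∀ q ∈ Metric.ball p r, ∀ t ∈ Icc (-T) T, ContinuousAt (fun q' => α (q', t)) q := by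
    intro q hq t ht
    have h1 : ContinuousOn (fun q' => α (q', t)) (Metric.closedBall p r) :=
      hαc.comp (f := fun q' : E2 => (q', t)) (by fun_prop) (fun x hx => ⟨hx, ht⟩)
    exact h1.continuousAt (mem_of_superset (Metric.isOpen_ball.mem_nhds hq) Metric.ball_subset_closedBall)
  have hball : Metric.ball p (min r (T * ‖Y p‖ / 2)) ∈ 𝓝 p := Metric.ball_mem_nhds _ (by positivity)
  filter_upwards [hball] with q hq
  have hqr : q ∈ Metric.ball p r := Metric.ball_subset_ball (min_le_left _ _) hq
  have hqc := Metric.ball_subset_closedBall hqr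
  have hq2 : ‖q - p‖ < T * ‖Y p‖ / 2 := by
    have := Metric.ball_subset_ball (min_le_right _ _) hq
    rwa [Metric.mem_ball, dist_eq_norm] at this
  obtain ⟨hq0, hqt⟩ := hα q hqc
  set g : ℝ → ℝ := fun t => inner ℝ (α (q, t) - p) (Y p) with hg
  have hgd : ∀ t ∈ Icc (-T) T, HasDerivAt g (inner ℝ (Y (α (q, t))) (Y p)) t := by
    intro t ht
    have := ((hqt t ht).1.sub_const p).inner ℝ (hasDerivAt_const t (Y p))
    simpa using this
  have hgc : ContinuousOn g (Icc (-T) T) := fun t ht => (hgd t ht).continuousAt.continuousWithinAt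
  have hmono := (convex_Icc (-T) T).mul_sub_le_image_sub_of_le_deriv hgc
    (fun t ht => (hgd t (interior_subset ht)).differentiableAt.differentiableWithinAt)
    (C := ‖Y p‖ ^ 2 / 2) (fun t ht => by
      rw [(hgd t (interior_subset ht)).deriv]; exact (hqt t (interior_subset ht)).2.2.2)
  have hg0 : |g 0| ≤ T * (‖Y p‖ ^ 2 / 2) := by
    have := abs_real_inner_le_norm (α (q, 0) - p) (Y p)
    rw [hq0] at this
    have e : g 0 = inner ℝ (q - p) (Y p) := by simp [hg, hq0]
    rw [e]; nlinarith
  have i0 : (0 : ℝ) ∈ Icc (-T) T := ⟨by linarith, hT.le⟩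
  have iT : T ∈ Icc (-T) T := ⟨by linarith, le_rfl⟩
  have iT' : -T ∈ Icc (-T) T := ⟨le_rfl, by linarith⟩
  have m1 := hmono 0 i0 T iT hT.le
  have m2 := hmono (-T) iT' 0 i0 (by linarith)
  have hg0' := abs_le.1 hg0
  obtain ⟨t₀, ht₀, hgt⟩ := intermediate_value_Icc (by linarith : -T ≤ T) hgc
    (show (0 : ℝ) ∈ Icc (g (-T)) (g T) from ⟨by nlinarith, by nlinarith⟩)
  obtain ⟨s, hs, hs2⟩ := perp hYp hgt
  have hsub : ∀ t ∈ uIcc 0 t₀, t ∈ Icc (-T) T := fun t ht => uIcc_subset_Icc i0 ht₀ ht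
  refine ⟨s, ?_, fun q' => α (q', t₀), fun t => α (q, t), t₀, ?_, hcont q hqr t₀ ht₀, ?_, hq0, rfl, ?_⟩
  · have := (hqt t₀ ht₀).2.2.1
    rw [← hs2] at this
    exact lt_of_mul_lt_mul_right this hyp.le
  · rw [← hs]; simp
  · filter_upwards [Metric.isOpen_ball.mem_nhds hqr] with q' hq'
    obtain ⟨b1, b2⟩ := hα q' (Metric.ball_subset_closedBall hq')
    have := cmp_curve (γ := fun t => α (q', t)) (t₀ := t₀) (L := L) hX hY htr
      ((abs_le.2 ht₀).trans hT1)
      (fun t ht => ⟨(b2 t (hsub t ht)).1, (b2 t (hsub t ht)).2.1⟩)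
    rwa [b1] at this
  · exact fun t ht => ⟨(hqt t (hsub t ht)).1, (hqt t (hsub t ht)).2.1.1⟩


def R1 (X Y : E2 → E2) (p : E2) : Prop :=
  ∃ c > (0 : ℝ), ∀ᶠ q in 𝓝 p, c * ‖X q‖ ≤ |dt (X q) (Y q)|

def R2 (X Y : E2 → E2) (p : E2) : Prop :=
  ∀ c > (0 : ℝ), ∀ᶠ q in 𝓝 p, |dt (X q) (Y q)| ≤ c * ‖X q‖

lemma R1.not_R2 {X Y : E2 → E2} {p : E2} (hnz : ¬ ∀ᶠ q in 𝓝 p, X q = 0) (h : R1 X Y p) :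
    ¬ R2 X Y p := by
  intro h2
  obtain ⟨c, hc, h⟩ := h
  apply hnz
  filter_upwards [h, h2 (c / 2) (by positivity)] with q a b
  by_contra hq
  have := norm_pos_iff.2 hq
  nlinarith

lemma dt_smul_left (a : ℝ) (u v : E2) : dt (a • u) v = a * dt u v := by
  simp [dt]; ring

lemma continuous_dt : Continuous (fun z : E2 × E2 => dt z.1 z.2) := by
  unfold dt; fun_prop

lemma R2.transport {X Y h : E2 → E2} {M : ℝ} (hM : 0 < M) {p q : E2} (hp : R2 X Y p)
    (hc : ContinuousAt h q) (hq : h q = p) (hcmp : ∀ᶠ q' in 𝓝 q, Cmp X Y M q' (h q')) :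
    R2 X Y q := by
  intro c hc0
  have h1 := hp (c / M ^ 2) (by positivity)
  rw [← hq] at h1
  filter_upwards [hc.eventually h1, hcmp] with q' a ⟨b1, b2, b3, b4⟩
  calc _ ≤ M * |dt (X (h q')) (Y (h q'))| := b3
    _ ≤ M * (c / M ^ 2 * ‖X (h q')‖) := by gcongr
    _ ≤ M * (c / M ^ 2 * (M * ‖X q'‖)) := by gcongr
    _ = _ := by field_simp

lemma dich {Ω : Set E2} (hΩ : IsOpen Ω) {X Y : E2 → E2} {f : E2 → ℝ}
    (hX : AnalyticOnNhd ℝ X Ω)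
    (hY : AnalyticOnNhd ℝ Y Ω) (hf : ContinuousOn f Ω)
    (htr : ∀ p ∈ Ω, fderiv ℝ X p (Y p) - fderiv ℝ Y p (X p) = f p • X p)
    {p : E2} (hp : p ∈ Ω) (hYp : Y p ≠ 0) (hnz : ¬ ∀ᶠ q in 𝓝 p, X q = 0) :
    (R1 X Y p ∨ R2 X Y p) ∧ ∀ᶠ q in 𝓝 p, X q = 0 → (R2 X Y p → R2 X Y q) ∧
      ∃ (γ : ℝ → E2) (t₀ : ℝ), γ 0 = q ∧ γ t₀ = p ∧
        ∀ t ∈ uIcc 0 t₀, HasDerivAt γ (Y (γ t)) t ∧ γ t ∈ Ω := by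
  obtain ⟨M, hM, H⟩ := local_lem hΩ hX hY hf htr hp hYp
  set n := J (Y p)
  have hl : AnalyticAt ℝ (fun s : ℝ => p + s • n) 0 := by fun_prop
  have hφ : AnalyticAt ℝ (fun s : ℝ => X (p + s • n)) 0 :=
    AnalyticAt.fun_comp (by simpa using hX p hp) hl
  have hYc : ContinuousAt (fun s : ℝ => Y (p + s • n)) 0 :=
    (AnalyticAt.fun_comp (by simpa using hY p hp) hl).continuousAt
  have hφ0 : ¬ ∀ᶠ s in 𝓝 (0 : ℝ), X (p + s • n) = 0 := by
    intro h
    obtain ⟨δ, hδ, hd⟩ := Metric.eventually_nhds_iff.1 h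
    apply hnz
    filter_upwards [H δ hδ] with q ⟨s, hs, h, γ, t₀, e, _, hc, _⟩
    have h1 := hc.self_of_nhds.1
    rw [e, hd (by simpa using hs)] at h1
    simpa using h1
  obtain ⟨k, g, hg, hg0, hgk⟩ := hφ.exists_eventuallyEq_pow_smul_nonzero_iff.2 hφ0
  have hgn : 0 < ‖g 0‖ := norm_pos_iff.2 hg0
  have hdc : ContinuousAt (fun s : ℝ => |dt (g s) (Y (p + s • n))|) 0 :=
    (continuous_dt.continuousAt.comp (f := fun s : ℝ => (g s, Y (p + s • n)))
      (hg.continuousAt.prodMk hYc)).abs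
  refine ⟨?_, ?_⟩
  · by_cases hd : dt (g 0) (Y p) = 0
    · right
      intro c hc
      have hlt : |dt (g 0) (Y (p + (0 : ℝ) • n))| < c / M ^ 2 * ‖g 0‖ := by
        simp only [zero_smul, add_zero, hd, abs_zero]; positivity
      have h1 := hdc.eventually_lt (continuousAt_const.mul hg.continuousAt.norm) hlt
      obtain ⟨δ, hδ, hd⟩ := Metric.eventually_nhds_iff.1 (h1.and hgk)
      filter_upwards [H δ hδ] with q ⟨s, hs, h, γ, t₀, e, _, hc, _⟩
      obtain ⟨b1, b2, b3, b4⟩ := hc.self_of_nhds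
      obtain ⟨a1, a2⟩ := hd (show dist s 0 < δ by simpa using hs)
      replace a1 : |dt (g s) (Y (p + s • n))| < c / M ^ 2 * ‖g s‖ := a1
      have key : |dt (X (h q)) (Y (h q))| ≤ c / M ^ 2 * ‖X (h q)‖ := by
        rw [e, a2, dt_smul_left, norm_smul, abs_mul, Real.norm_eq_abs]
        nlinarith [mul_le_mul_of_nonneg_left a1.le (abs_nonneg ((s - 0) ^ k))]
      calc _ ≤ M * |dt (X (h q)) (Y (h q))| := b3
        _ ≤ M * (c / M ^ 2 * ‖X (h q)‖) := by gcongr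
        _ ≤ M * (c / M ^ 2 * (M * ‖X q‖)) := by gcongr
        _ = _ := by field_simp
    · left
      have hdp : 0 < |dt (g 0) (Y p)| := abs_pos.2 hd
      set c := |dt (g 0) (Y p)| / (2 * ‖g 0‖) with hcdef
      have hcpos : 0 < c := by positivity
      have hlt : c * ‖g 0‖ < |dt (g 0) (Y (p + (0 : ℝ) • n))| := by
        simp only [zero_smul, add_zero, hcdef]
        field_simp; linarith
      have h1 := (continuousAt_const.mul hg.continuousAt.norm).eventually_lt hdc hlt
      obtain ⟨δ, hδ, hd⟩ := Metric.eventually_nhds_iff.1 (h1.and hgk)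
      refine ⟨c / M ^ 2, by positivity, ?_⟩
      filter_upwards [H δ hδ] with q ⟨s, hs, h, γ, t₀, e, _, hc, _⟩
      obtain ⟨b1, b2, b3, b4⟩ := hc.self_of_nhds
      obtain ⟨a1, a2⟩ := hd (show dist s 0 < δ by simpa using hs)
      replace a1 : c * ‖g s‖ < |dt (g s) (Y (p + s • n))| := a1
      have key : c * ‖X (h q)‖ ≤ |dt (X (h q)) (Y (h q))| := by
        rw [e, a2, dt_smul_left, norm_smul, abs_mul, Real.norm_eq_abs]
        nlinarith [mul_le_mul_of_nonneg_left a1.le (abs_nonneg ((s - 0) ^ k))]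
      calc c / M ^ 2 * ‖X q‖ ≤ c / M ^ 2 * (M * ‖X (h q)‖) := by gcongr
        _ = (c * ‖X (h q)‖) / M := by field_simp
        _ ≤ (M * |dt (X q) (Y q)|) / M := div_le_div_of_nonneg_right (key.trans b4) hM.le
        _ = _ := by field_simp
  · have hne : ∀ᶠ s in 𝓝 (0 : ℝ), X (p + s • n) = 0 → s = 0 := by
      filter_upwards [hgk, hg.continuousAt.eventually_ne hg0] with s a b h
      rw [a] at h
      by_contra hs
      simp [hs, b] at h
    obtain ⟨δ, hδ, hd⟩ := Metric.eventually_nhds_iff.1 hne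
    filter_upwards [H δ hδ] with q ⟨s, hs, h, γ, t₀, e, hcont, hc, g1, g2, g3⟩ hq
    obtain ⟨b1, b2, b3, b4⟩ := hc.self_of_nhds
    have hs0 : s = 0 := by
      apply hd (by simpa using hs)
      rw [← e, ← norm_eq_zero]
      rw [hq, norm_zero, mul_zero] at b2
      exact le_antisymm b2 (norm_nonneg _)
    have e' : h q = p := by rw [e, hs0]; simp
    exact ⟨fun hR => hR.transport hM hcont e' hc, γ, t₀, g1, g2.trans e', g3⟩

lemma zero_transport {Ω : Set E2} {d : ℕ} {Y : Fin d → E2 → E2}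
    (hY : ∀ i, AnalyticOnNhd ℝ (Y i) Ω)
    (hsuper : ∀ i j k : Fin d, j ≤ k →
      ∃ c : Fin d → ℝ, ∀ p ∈ Ω,
        fderiv ℝ (Y j) p (Y i p) - fderiv ℝ (Y i) p (Y j p)
          = ∑ m ∈ Finset.Iic k, c m • Y m p)
    (i : Fin d) {γ : ℝ → E2} {t₀ : ℝ}
    (hγ : ∀ t ∈ uIcc 0 t₀, HasDerivAt γ (Y i (γ t)) t ∧ γ t ∈ Ω)
    (h0 : ∀ j < i, Y j (γ t₀) = 0) : ∀ j < i, ∀ t ∈ uIcc 0 t₀, Y j (γ t) = 0 := by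
  intro j
  induction j using WellFoundedLT.induction with
  | _ j ih =>
  intro hj
  obtain ⟨c, hc⟩ := hsuper i j j le_rfl
  have hcont : ContinuousOn (fun t => fderiv ℝ (Y i) (γ t)) (uIcc 0 t₀) := fun t ht =>
    (ContinuousAt.comp (f := γ) (hY i _ (hγ t ht).2).fderiv.continuousAt
      (hγ t ht).1.continuousAt).continuousWithinAt
  obtain ⟨L, hL⟩ := isCompact_uIcc.exists_bound_of_continuousOn hcont
  have hd : ∀ t ∈ uIcc 0 t₀, HasDerivAt (fun t => Y j (γ t))
      (fderiv ℝ (Y i) (γ t) (Y j (γ t)) + c j • Y j (γ t)) t := by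
    intro t ht
    have h1 := (hY j _ (hγ t ht).2).differentiableAt.hasFDerivAt.comp_hasDerivAt t (hγ t ht).1
    have h2 := hc _ (hγ t ht).2
    rw [Finset.sum_eq_single j] at h2
    · rw [← h2, add_sub_cancel]; exact h1
    · intro m hm hmj
      have hlt : m < j := lt_of_le_of_ne (Finset.mem_Iic.1 hm) hmj
      rw [ih m hlt (hlt.trans hj) t ht, smul_zero]
    · intro h; exact absurd (Finset.mem_Iic.2 le_rfl) h
  have hb : ∀ t ∈ uIcc 0 t₀, ‖fderiv ℝ (Y i) (γ t) (Y j (γ t)) + c j • Y j (γ t)‖ ≤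
      (L + |c j|) * ‖Y j (γ t)‖ := by
    intro t ht
    refine (norm_add_le _ _).trans ?_
    rw [add_mul, norm_smul, Real.norm_eq_abs]
    gcongr
    exact (ContinuousLinearMap.le_opNorm _ _).trans (by gcongr; exact hL t ht)
  intro t ht
  have hsub : uIcc t₀ t ⊆ uIcc 0 t₀ := uIcc_subset_uIcc right_mem_uIcc ht
  have := gron (fun s hs => hd s (hsub hs)) (fun s hs => hb s (hsub hs))
  rw [h0 j hj, norm_zero, zero_mul] at this
  exact norm_le_zero_iff.1 this


lemma dt_sq (u y : E2) : dt u y ^ 2 + dt u (J y) ^ 2 = ‖u‖ ^ 2 * ‖y‖ ^ 2 := by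
  rw [EuclideanSpace.real_norm_sq_eq, EuclideanSpace.real_norm_sq_eq, Fin.sum_univ_two,
    Fin.sum_univ_two]
  simp [dt, J]; ring

lemma J_ne {y : E2} (hy : y ≠ 0) : J y ≠ 0 := by
  intro h
  have := dt_sq y y
  rw [h] at this
  simp [dt] at this
  have h2 : y 0 * y 1 - y 1 * y 0 = 0 := by ring
  rw [h2] at this
  have := norm_pos_iff.2 hy
  simp at *
  exact hy ‹_›

lemma continuous_J : Continuous J := by
  unfold J; fun_prop

lemma R2.R1_J {X Y : E2 → E2} {p : E2} (h : R2 X Y p) (hc : ContinuousAt Y p) (hY : Y p ≠ 0) :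
    R1 X (fun q => J (Y q)) p := by
  have hy : 0 < ‖Y p‖ := norm_pos_iff.2 hY
  refine ⟨‖Y p‖ / 4, by positivity, ?_⟩
  filter_upwards [h (‖Y p‖ / 4) (by positivity),
    hc.norm.eventually_const_lt (show ‖Y p‖ / 2 < ‖Y p‖ by linarith)] with q a b
  apply abs_le_of_sq_le_sq' _ (abs_nonneg _) |>.2
  rw [sq_abs]
  have e := dt_sq (X q) (Y q)
  have a2 : dt (X q) (Y q) ^ 2 ≤ (‖Y p‖ / 4 * ‖X q‖) ^ 2 := by
    rw [← sq_abs]; gcongr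
  have b2 : (‖Y p‖ / 2) ^ 2 ≤ ‖Y q‖ ^ 2 := by gcongr
  nlinarith [mul_le_mul_of_nonneg_left b2 (sq_nonneg ‖X q‖), mul_nonneg (sq_nonneg ‖X q‖) (sq_nonneg ‖Y p‖)]

lemma R1.congr {X V v : E2 → E2} {p : E2} (h : R1 X V p) (hV : ContinuousAt V p)
    (hv : ContinuousAt v p) (e : v p = V p) : R1 X v p := by
  obtain ⟨c, hc, h⟩ := h
  refine ⟨c / 2, by positivity, ?_⟩
  have h2 : ContinuousAt (fun q => ‖V q - v q‖) p := (hV.sub hv).norm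
  filter_upwards [h, h2.eventually_lt_const (show ‖V p - v p‖ < c / 4 by
    rw [e, sub_self, norm_zero]; positivity)] with q a b
  have h3 := dt_abs_le (X q) (V q - v q)
  have h4 : dt (X q) (V q) = dt (X q) (v q) + dt (X q) (V q - v q) := by simp [dt]; ring
  have h5 := abs_add_le (dt (X q) (v q)) (dt (X q) (V q - v q))
  rw [← h4] at h5
  nlinarith [mul_le_mul_of_nonneg_left b.le (norm_nonneg (X q))]

lemma perturb {X : E2 → E2} {D K : Set E2} (hD : IsCompact D) (hXc : ContinuousOn X D)
    (hK : K = {p ∈ D | X p = 0}) {v : E2 → E2} (hv : Continuous v)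
    (hv0 : ∀ p ∈ K, v p ≠ 0) (hR : ∀ p ∈ K, R1 X v p) {ε : ℝ} (hε : 0 < ε) :
    ∃ X' : E2 → E2, ContinuousOn X' D ∧ (∀ p ∈ D, ‖X' p - X p‖ < ε) ∧ ∀ p ∈ D, X' p ≠ 0 := by
  set S := interior {q | X q ≠ 0 → dt (X q) (v q) ≠ 0} with hS
  have hKS : K ⊆ S := by
    intro p hp
    obtain ⟨c, hc, h⟩ := hR p hp
    rw [hS, mem_interior_iff_mem_nhds]
    filter_upwards [h] with q a hq h0
    rw [h0, abs_zero] at a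
    have := norm_pos_iff.2 hq
    nlinarith
  have hC : IsCompact (D \ S) := hD.diff isOpen_interior
  obtain ⟨m, hm, hmin⟩ := hC.exists_forall_le' (f := fun q => ‖X q‖) (a := 0)
    (hXc.norm.mono sdiff_subset) (fun q hq => norm_pos_iff.2 (fun h0 =>
      hq.2 (hKS (by rw [hK]; exact ⟨hq.1, h0⟩))))
  obtain ⟨B, hB⟩ := hD.exists_bound_of_continuousOn hv.continuousOn
  set δ := min ε m / (2 * (|B| + 1)) with hδ
  have hmin0 : 0 < min ε m := lt_min hε hm
  have hδ0 : 0 < δ := by positivity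
  have hbd : ∀ p ∈ D, ‖δ • v p‖ < min ε m := by
    intro p hp
    rw [norm_smul, Real.norm_eq_abs, abs_of_pos hδ0]
    have h1 : ‖v p‖ ≤ |B| := (hB p hp).trans (le_abs_self B)
    have h2 : δ * (2 * (|B| + 1)) = min ε m := by rw [hδ]; field_simp
    nlinarith [abs_nonneg B, mul_le_mul_of_nonneg_left h1 hδ0.le, mul_nonneg hδ0.le (abs_nonneg B)]
  refine ⟨fun q => X q + δ • v q, hXc.add (hv.const_smul δ).continuousOn, fun p hp => ?_,
    fun p hp h0 => ?_⟩
  · simpa using (hbd p hp).trans_le (min_le_left _ _)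
  · have e : X p = -(δ • v p) := eq_neg_of_add_eq_zero_left h0
    by_cases hpS : p ∈ S
    · have h1 := interior_subset hpS
      by_cases hX0 : X p = 0
      · have : v p = 0 := by
          rw [hX0] at e
          have := neg_eq_zero.1 e.symm
          exact (smul_eq_zero.1 this).resolve_left hδ0.ne'
        exact hv0 p (by rw [hK]; exact ⟨hp, hX0⟩) this
      · apply h1 hX0
        rw [e]; simp [dt]; ring
    · have h1 := hmin p ⟨hp, hpS⟩
      rw [e, norm_neg] at h1
      exact absurd (hbd p hp) (not_lt.2 ((min_le_right _ _).trans h1))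

lemma not_locally_zero {Ω : Set E2} {X : E2 → E2} (hX : AnalyticOnNhd ℝ X Ω)
    {U : Set E2} (hUopen : IsOpen U) (hUconn : IsConnected U)
    (hUcomp : IsCompact (closure U)) (hUΩ : closure U ⊆ Ω)
    (hKU : {p ∈ closure U | X p = 0} ⊆ U) {p : E2} (hp : p ∈ U) :
    ¬ ∀ᶠ q in 𝓝 p, X q = 0 := by
  intro h
  have h1 : EqOn X 0 U := (hX.mono (subset_closure.trans hUΩ)).eqOn_zero_of_preconnected_of_eventuallyEq_zero
    hUconn.isPreconnected hp h
  have h2 : EqOn X 0 (closure U) := h1.of_subset_closure (hX.continuousOn.mono hUΩ)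
    continuousOn_const subset_closure le_rfl
  have h3 : closure U ⊆ U := fun q hq => hKU ⟨hq, h2 hq⟩
  have h4 : IsClosed U := closure_subset_iff_isClosed.1 h3
  have h5 : U = univ := IsClopen.eq_univ ⟨h4, hUopen⟩ hUconn.nonempty
  rw [h5, closure_univ] at hUcomp
  exact noncompact_univ E2 hUcomp

end Hirsch

open Hirsch Filter Topology in
/-- **Hirsch, Theorem 1.3(b) (local form).**
A supersolvable family `Y₁, …, Y_d` of real-analytic vector fields tracking `X`
(the spans `span{Y₁,…,Y_k}` forming a chain of ideals) has a common zero in every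
essential `X`-block. -/
theorem common_zero_of_supersolvable_tracking_real
    (Ω : Set (EuclideanSpace ℝ (Fin 2))) (hΩ : IsOpen Ω)
    (X : EuclideanSpace ℝ (Fin 2) → EuclideanSpace ℝ (Fin 2))
    (hX : AnalyticOnNhd ℝ X Ω)
    (U : Set (EuclideanSpace ℝ (Fin 2))) (hUopen : IsOpen U) (hUconn : IsConnected U)
    (hUcomp : IsCompact (closure U)) (hUΩ : closure U ⊆ Ω)
    (K : Set (EuclideanSpace ℝ (Fin 2)))
    (hK : K = {p ∈ closure U | X p = 0}) (hKU : K ⊆ U)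
    (hess : ∃ ε > 0, ∀ X' : EuclideanSpace ℝ (Fin 2) → EuclideanSpace ℝ (Fin 2),
      ContinuousOn X' (closure U) → (∀ p ∈ closure U, ‖X' p - X p‖ < ε) →
      ∃ p ∈ closure U, X' p = 0)
    (d : ℕ)
    (Y : Fin d → EuclideanSpace ℝ (Fin 2) → EuclideanSpace ℝ (Fin 2))
    (hY : ∀ i, AnalyticOnNhd ℝ (Y i) Ω)
    -- each `Y i` tracks `X`
    (f : Fin d → EuclideanSpace ℝ (Fin 2) → ℝ) (hf : ∀ i, ContinuousOn (f i) Ω)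
    (htrack : ∀ i, ∀ p ∈ Ω,
      fderiv ℝ X p (Y i p) - fderiv ℝ (Y i) p (X p) = f i p • X p)
    -- supersolvability: for `j ≤ k`, the bracket `[Y i, Y j]` is a constant-coefficient
    -- linear combination of `Y₁, …, Y_k`
    (hsuper : ∀ i j k : Fin d, j ≤ k →
      ∃ c : Fin d → ℝ, ∀ p ∈ Ω,
        fderiv ℝ (Y j) p (Y i p) - fderiv ℝ (Y i) p (Y j p)
          = ∑ m ∈ Finset.Iic k, c m • Y m p) :
    ∃ p ∈ K, ∀ i, Y i p = 0 := by
  classical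
  by_contra hno
  push Not at hno
  obtain ⟨ε, hε, hess⟩ := hess
  have hXcU : ContinuousOn X (closure U) := hX.continuousOn.mono hUΩ
  have hKne : K.Nonempty := by
    obtain ⟨p, hp, h0⟩ := hess X hXcU (fun p _ => by simpa using hε)
    exact ⟨p, by rw [hK]; exact ⟨hp, h0⟩⟩
  have hKΩ : K ⊆ Ω := fun p hp => hUΩ (subset_closure (hKU hp))
  have hKX : ∀ p ∈ K, X p = 0 := fun p hp => by rw [hK] at hp; exact hp.2
  have hKcl : IsClosed K := by
    have h := hXcU.preimage_isClosed_of_isClosed isClosed_closure (isClosed_singleton (x := 0))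
    rw [hK]; exact h
  have hnz : ∀ p ∈ K, ¬ ∀ᶠ q in 𝓝 p, X q = 0 := fun p hp =>
    not_locally_zero hX hUopen hUconn hUcomp hUΩ (hK ▸ hKU) (hKU hp)
  have hmin : ∀ p, p ∈ K → ∃ i, Y i p ≠ 0 ∧ ∀ j < i, Y j p = 0 := by
    intro p hp
    obtain ⟨i, hi, hi2⟩ := WellFounded.has_min (wellFounded_lt (α := Fin d)) {i | Y i p ≠ 0} (hno p hp)
    exact ⟨i, hi, fun j hj => by_contra fun h => hi2 j h hj⟩
  have hne : Nonempty (Fin d) := by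
    obtain ⟨p, hp⟩ := hKne
    exact ⟨(hno p hp).choose⟩
  choose! ι hι using hmin
  have hYc : ∀ i, ∀ p ∈ K, ContinuousAt (Y i) p := fun i p hp => (hY i p (hKΩ hp)).continuousAt
  have hdich := fun p (hp : p ∈ K) => dich hΩ hX (hY (ι p)) (hf (ι p)) (htrack (ι p)) (hKΩ hp)
    (hι p hp).1 (hnz p hp)
  have hR1 : ∀ p ∈ K, ¬ R2 X (Y (ι p)) p → R1 X (Y (ι p)) p := fun p hp h =>
    (hdich p hp).1.resolve_right h
  have loc : ∀ p ∈ K, ∀ᶠ q in 𝓝 p, q ∈ K → ι q = ι p ∧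
      (R2 X (Y (ι p)) q ↔ R2 X (Y (ι p)) p) := by
    intro p hp
    have hev : ∀ᶠ q in 𝓝 p, ¬ R2 X (Y (ι p)) p → R1 X (Y (ι p)) q := by
      by_cases h : R2 X (Y (ι p)) p
      · exact Eventually.of_forall fun q h' => absurd h h'
      · obtain ⟨c, hc, h1⟩ := hR1 p hp h
        filter_upwards [eventually_eventually_nhds.2 h1] with q hq _
        exact ⟨c, hc, hq⟩
    filter_upwards [(hdich p hp).2, hev, (hYc (ι p) p hp).eventually_ne (hι p hp).1] with q h1 h2 h3 hq
    obtain ⟨h4, γ, t₀, g0, g1, hγ⟩ := h1 (hKX q hq)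
    have hz : ∀ j < ι p, Y j q = 0 := by
      intro j hj
      have := zero_transport hY hsuper (ι p) hγ (by rw [g1]; exact (hι p hp).2) j hj 0 left_mem_uIcc
      rwa [g0] at this
    refine ⟨?_, fun h => by_contra fun h' => (h2 h').not_R2 (hnz q hq) h, h4⟩
    rcases lt_trichotomy (ι q) (ι p) with h | h | h
    · exact absurd (hz _ h) (hι q hq).1
    · exact h
    · exact absurd ((hι q hq).2 _ h) h3
  let V : E2 → E2 → E2 := fun p q => if R2 X (Y (ι p)) p then J (Y (ι p) q) else Y (ι p) q
  have hVc : ∀ p ∈ K, ContinuousAt (V p) p := by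
    intro p hp
    by_cases h : R2 X (Y (ι p)) p
    · simp only [V, h, if_true]
      exact continuous_J.continuousAt.comp (hYc _ p hp)
    · simp only [V, h, if_false]
      exact hYc _ p hp
  have hv0 : ContinuousOn (fun q => V q q) K := by
    intro p hp
    refine (hVc p hp).continuousWithinAt.congr_of_eventuallyEq ?_ rfl
    filter_upwards [self_mem_nhdsWithin, mem_nhdsWithin_of_mem_nhds (loc p hp)] with q hq h
    obtain ⟨h1, h2⟩ := h hq
    simp only [V, h1, h2]
  obtain ⟨v, hv⟩ := ContinuousMap.exists_restrict_eq hKcl ⟨K.domRestrict (fun q => V q q), hv0.domRestrict⟩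
  have hvK : ∀ p ∈ K, v p = V p p := fun p hp => congrArg (fun g => g ⟨p, hp⟩) hv
  obtain ⟨X', c1, c2, c3⟩ := perturb hUcomp hXcU hK v.continuous
    (fun p hp => by
      rw [hvK p hp]
      by_cases h : R2 X (Y (ι p)) p
      · simp only [V, h, if_true]
        exact J_ne (hι p hp).1
      · simp only [V, h, if_false]
        exact (hι p hp).1)
    (fun p hp => by
      have h1 : R1 X (V p) p := by
        by_cases h : R2 X (Y (ι p)) p
        · simp only [V, h, if_true]
          exact h.R1_J (hYc _ p hp) (hι p hp).1
        · simp only [V, h, if_false]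
          exact hR1 p hp h
      exact h1.congr (hVc p hp) v.continuous.continuousAt (hvK p hp)) hε
  obtain ⟨p, hp, h0⟩ := hess X' c1 c2
  exact c3 p hp h0
end

section
/- Let Ω ⊆ ℂ² be open and let X : Ω → ℂ² be a holomorphic vector field. Let U ⊆ Ω be a connected open set whose closure cl U is compact and contained in Ω, let K := {p ∈ cl U : X(p) = 0}, assume K ⊆ U, and assume K is essential: there exists ε > 0 such that every continuous map X' : cl U → ℂ² with ‖X'(p) − X(p)‖ < ε for all p ∈ cl U has a zero in cl U. Let 𝒢 be a set of holomorphic vector fields on Ω that is closed under addition, multiplication by complex scalars, and Lie bracket, and such that every Y ∈ 𝒢 tracks X: for each Y ∈ 𝒢 there is a continuous f_Y : Ω → ℂ with DX(p)(Y(p)) − DY(p)(X(p)) = f_Y(p) • X(p) for all p ∈ Ω. Then there exists p ∈ K with Y(p) = 0 for every Y ∈ 𝒢. -/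
open Set
open Topology Filter in
theorem aux_bound {E : Type*} [NormedAddCommGroup E] [NormedSpace ℂ E]
    {Ω : Set E} (hΩ : IsOpen Ω) {Y : E → E} (hY : DifferentiableOn ℂ Y Ω) {p : E} (hp : p ∈ Ω) :
    ∃ C : NNReal, ∃ r > 0, Metric.ball p r ⊆ Ω ∧
      ∀ z ∈ Metric.ball p r, ‖fderiv ℂ Y z‖ ≤ C := by
  have hc : ContinuousAt Y p := (hY.differentiableAt (hΩ.mem_nhds hp)).continuousAt
  have h1 : ∀ᶠ z in 𝓝 p, z ∈ Ω ∧ Y z ∈ Metric.ball (Y p) (1/2) :=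
    Filter.Eventually.and (hΩ.mem_nhds hp) (hc.eventually (Metric.ball_mem_nhds _ (by norm_num)))
  obtain ⟨d, hd, h⟩ := Metric.eventually_nhds_iff_ball.1 h1
  refine ⟨.mk (1 / (d/2)) (by positivity), d/2, by positivity, fun z hz => (h z ?_).1, fun z hz => ?_⟩
  · exact Metric.ball_subset_ball (by linarith) hz
  have hsub : Metric.ball z (d/2) ⊆ Metric.ball p d := by
    apply Metric.ball_subset_ball'
    have := Metric.mem_ball.1 hz
    linarith
  refine Complex.norm_fderiv_le_div_of_mapsTo_ball (R₁ := d/2) (R₂ := 1)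
    (hY.mono fun w hw => (h w (hsub hw)).1) ?_ (by positivity)
  intro w hw
  have a := (h w (hsub hw)).2
  have b := (h z (hsub (Metric.mem_ball_self (by positivity)))).2
  rw [Metric.mem_ball] at a b
  rw [Metric.mem_closedBall]
  have := dist_triangle_right (Y w) (Y z) (Y p)
  linarith

open Topology Filter Metric in
theorem aux_flow_s4 {E : Type*} [NormedAddCommGroup E] [NormedSpace ℝ E] [CompleteSpace E]
    {Y : E → E} {p : E} {K : NNReal} {a : ℝ} (ha : 0 < a) (hl : LipschitzOnWith K Y (ball p a)) :
    ∃ γ : ℝ → E, γ 0 = p ∧ ∀ᶠ t in 𝓝 (0:ℝ), HasDerivAt γ (Y (γ t)) t := by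
  set L := K * a + ‖Y p‖ + 1 with hL
  have hL0 : 0 < L := by positivity
  have hb (x : E) (hx : x ∈ closedBall p (a / 2)) : ‖Y x‖ ≤ L := by
    rw [hL]
    calc
      ‖Y x‖ ≤ ‖Y x - Y p‖ + ‖Y p‖ := norm_le_norm_sub_add _ _
      _ ≤ K * ‖x - p‖ + ‖Y p‖ := by
        gcongr
        apply hl.norm_sub_le _ (mem_ball_self ha)
        exact closedBall_subset_ball (half_lt_self ha) hx
      _ ≤ K * a + ‖Y p‖ := by
        gcongr
        rw [← mem_closedBall_iff_norm]
        exact closedBall_subset_closedBall (half_le_self (le_of_lt ha)) hx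
      _ ≤ L := le_add_of_nonneg_right zero_le_one
  let ε := a / L / 2
  have hε0 : 0 < ε := by positivity
  have hpl : IsPicardLindelof (fun _ : ℝ ↦ Y) (tmin := -ε) (tmax := ε)
      ⟨0, by constructor <;> linarith⟩ p (.mk (a / 2) (half_pos ha).le) 0 (.mk L hL0.le) K := by
    have hl' : LipschitzOnWith K Y (closedBall p (a / 2)) :=
      hl.mono (closedBall_subset_ball (half_lt_self ha))
    apply IsPicardLindelof.of_time_independent hb hl'
    simp [ε, field]
  obtain ⟨γ, h0, hγ⟩ := hpl.exists_eq_forall_mem_Icc_hasDerivWithinAt₀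
  refine ⟨γ, h0, ?_⟩
  filter_upwards [Ioo_mem_nhds (neg_lt_zero.2 hε0) hε0] with t ht
  exact (hγ t (Ioo_subset_Icc_self ht)).hasDerivAt (Icc_mem_nhds ht.1 ht.2)

open Topology Filter Metric in
/-- `X` vanishes along the integral curve of a tracking field through a zero of `X`. -/
theorem aux_track {E : Type*} [NormedAddCommGroup E] [NormedSpace ℂ E] [NormedSpace ℝ E]
    [IsScalarTower ℝ ℂ E] [CompleteSpace E]
    {Ω : Set E} (hΩ : IsOpen Ω) {X Y : E → E} (hX : DifferentiableOn ℂ X Ω)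
    (hY : DifferentiableOn ℂ Y Ω) {f : E → ℂ} (hf : ContinuousOn f Ω)
    (htr : ∀ p ∈ Ω, fderiv ℂ X p (Y p) - fderiv ℂ Y p (X p) = f p • X p)
    {p : E} (hp : p ∈ Ω) (hXp : X p = 0) :
    ∃ γ : ℝ → E, γ 0 = p ∧ (∀ᶠ t in 𝓝 (0:ℝ), HasDerivAt γ (Y (γ t)) t) ∧
      ∀ᶠ t in 𝓝 (0:ℝ), X (γ t) = 0 := by
  obtain ⟨C, r, hr, hsub, hC⟩ := aux_bound hΩ hY hp
  have hl : LipschitzOnWith C Y (ball p r) :=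
    (convex_ball p r).lipschitzOnWith_of_nnnorm_fderiv_le (𝕜 := ℂ)
      (fun x hx => hY.differentiableAt (hΩ.mem_nhds (hsub hx))) hC
  obtain ⟨γ, h0, hγ⟩ := aux_flow_s4 hr hl
  refine ⟨γ, h0, hγ, ?_⟩
  have hγc : Tendsto γ (𝓝 0) (𝓝 p) := by
    have := hγ.self_of_nhds.continuousAt
    rwa [ContinuousAt, h0] at this
  have hball : ∀ᶠ t in 𝓝 (0:ℝ), γ t ∈ ball p r := hγc (ball_mem_nhds p hr)
  have hfb : ∀ᶠ t in 𝓝 (0:ℝ), ‖f (γ t)‖ < ‖f p‖ + 1 :=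
    hγc.eventually ((hf.continuousAt (hΩ.mem_nhds hp)).norm.eventually_lt_const
      (by linarith))
  refine ODE_solution_unique_of_eventually (K := C + .mk (‖f p‖ + 1) (by positivity))
    (v := fun t w => fderiv ℂ Y (γ t) w + f (γ t) • w) (s := fun _ => univ)
    (f := fun t => X (γ t)) (g := fun _ => 0) (t₀ := 0) ?_ ?_ ?_ ?_
  · filter_upwards [hball, hfb] with t ht hft
    apply LipschitzWith.lipschitzOnWith
    apply LipschitzWith.of_dist_le_mul
    intro x y
    rw [dist_eq_norm, dist_eq_norm]
    have : fderiv ℂ Y (γ t) x + f (γ t) • x - (fderiv ℂ Y (γ t) y + f (γ t) • y)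
      = fderiv ℂ Y (γ t) (x - y) + f (γ t) • (x - y) := by
      rw [map_sub, smul_sub]; abel
    rw [this]
    refine (norm_add_le _ _).trans ?_
    rw [norm_smul]
    rw [NNReal.coe_add, add_mul]
    exact add_le_add (ContinuousLinearMap.le_of_opNorm_le _ (hC _ ht) _)
      (mul_le_mul_of_nonneg_right hft.le (norm_nonneg _))
  · filter_upwards [hball, hγ] with t ht hd
    refine ⟨?_, trivial⟩
    have hXd := (hX.differentiableAt (hΩ.mem_nhds (hsub ht))).hasFDerivAt
    have := (hXd.restrictScalars ℝ).comp_hasDerivAt t hd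
    refine this.congr_deriv ?_
    have := htr _ (hsub ht)
    simp only [ContinuousLinearMap.coe_restrictScalars']
    rw [← this]; abel
  · filter_upwards with t
    refine ⟨?_, trivial⟩
    simpa using hasDerivAt_const t (0:E)
  · simp [h0, hXp]

open Topology Filter in
theorem aux_second_s4 {φ φ' : ℝ → ℝ} {c : ℝ} (h : ∀ᶠ t in 𝓝 (0:ℝ), HasDerivAt φ (φ' t) t)
    (h' : HasDerivAt φ' c 0) (hmax : IsLocalMax φ 0) : c ≤ 0 := by
  by_contra! hc
  have e1 : deriv φ =ᶠ[𝓝 0] φ' := h.mono fun t ht => ht.deriv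
  have e2 : deriv (deriv φ) 0 = c := by rw [e1.deriv_eq, h'.deriv]
  have hmin := isLocalMin_of_deriv_deriv_pos (by rw [e2]; exact hc) hmax.deriv_eq_zero
    h.self_of_nhds.continuousAt
  have e3 : φ =ᶠ[𝓝 0] fun _ => φ 0 := by
    filter_upwards [hmin, hmax] with t a b using le_antisymm b a
  have e4 : deriv (deriv φ) 0 = 0 := by
    rw [e3.deriv.deriv_eq]; simp
  linarith

open Topology Filter in
/-- Second order consequence of local maximality of the norm along the integral curve. -/
theorem aux_max {E : Type*} [NormedAddCommGroup E] [InnerProductSpace ℂ E] [NormedSpace ℝ E]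
    [IsScalarTower ℝ ℂ E] [CompleteSpace E]
    {Ω : Set E} (hΩ : IsOpen Ω) {X Y : E → E} (hX : DifferentiableOn ℂ X Ω)
    (hY : DifferentiableOn ℂ Y Ω) {f : E → ℂ} (hf : ContinuousOn f Ω)
    (htr : ∀ p ∈ Ω, fderiv ℂ X p (Y p) - fderiv ℂ Y p (X p) = f p • X p)
    {p : E} (hp : p ∈ Ω) (hXp : X p = 0)
    (hmax : ∀ᶠ z in 𝓝 p, X z = 0 → ‖z‖ ≤ ‖p‖) :
    ‖Y p‖ ^ 2 + (inner ℂ p (fderiv ℂ Y p (Y p))).re ≤ 0 := by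
  obtain ⟨γ, h0, hγ, hz⟩ := aux_track hΩ hX hY hf htr hp hXp
  have hγc : Tendsto γ (𝓝 0) (𝓝 p) := by
    have := hγ.self_of_nhds.continuousAt
    rwa [ContinuousAt, h0] at this
  have hγ0 := hγ.self_of_nhds
  have key (u v : E) : (inner ℂ u v).re = (inner ℂ v u).re := by
    rw [← inner_conj_symm, Complex.conj_re]
  have := aux_second_s4 (φ := fun t => (inner ℂ (γ t) (γ t)).re)
    (φ' := fun t => 2 * (inner ℂ (γ t) (Y (γ t))).re)
    (c := 2 * (‖Y p‖ ^ 2 + (inner ℂ p (fderiv ℂ Y p (Y p))).re)) ?_ ?_ ?_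
  · linarith
  · filter_upwards [hγ] with t ht
    have := Complex.reCLM.hasFDerivAt.comp_hasDerivAt t (ht.inner ℂ ht)
    refine this.congr_deriv ?_
    simp only [Complex.reCLM_apply, Complex.add_re]
    rw [key (Y (γ t))]; ring
  · have hYd := (hY.differentiableAt (hΩ.mem_nhds hp)).hasFDerivAt.restrictScalars ℝ
    rw [← h0] at hYd
    have h2 := hYd.comp_hasDerivAt (0:ℝ) hγ0
    have := (Complex.reCLM.hasFDerivAt.comp_hasDerivAt (0:ℝ) (hγ0.inner ℂ h2)).const_mul 2
    refine this.congr_deriv ?_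
    simp only [Complex.reCLM_apply, Complex.add_re, h0, Function.comp,
      ContinuousLinearMap.coe_restrictScalars']
    have : (inner ℂ (Y p) (Y p)).re = ‖Y p‖ ^ 2 := by
      rw [inner_self_eq_norm_sq_to_K]; norm_cast
    rw [this]; ring
  · have hn (u : E) : (inner ℂ u u).re = ‖u‖ ^ 2 := by
      rw [inner_self_eq_norm_sq_to_K]; norm_cast
    filter_upwards [hz, hγc.eventually hmax] with t a b
    simp only [hn, h0]
    gcongr
    exact b a

/-- **Hirsch, Theorem 1.3(a) (local form).**
A Lie algebra `𝒢` of holomorphic vector fields on an open set `Ω ⊆ ℂ²`, each of whose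
members tracks `X`, has a common zero in every essential `X`-block. -/
theorem common_zero_of_lie_algebra_tracking_complex
    (Ω : Set (EuclideanSpace ℂ (Fin 2))) (hΩ : IsOpen Ω)
    (X : EuclideanSpace ℂ (Fin 2) → EuclideanSpace ℂ (Fin 2))
    (hX : DifferentiableOn ℂ X Ω)
    (U : Set (EuclideanSpace ℂ (Fin 2))) (hUopen : IsOpen U) (hUconn : IsConnected U)
    (hUcomp : IsCompact (closure U)) (hUΩ : closure U ⊆ Ω)
    (K : Set (EuclideanSpace ℂ (Fin 2)))
    (hK : K = {p ∈ closure U | X p = 0}) (hKU : K ⊆ U)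
    (hess : ∃ ε > 0, ∀ X' : EuclideanSpace ℂ (Fin 2) → EuclideanSpace ℂ (Fin 2),
      ContinuousOn X' (closure U) → (∀ p ∈ closure U, ‖X' p - X p‖ < ε) →
      ∃ p ∈ closure U, X' p = 0)
    (𝒢 : Set (EuclideanSpace ℂ (Fin 2) → EuclideanSpace ℂ (Fin 2)))
    (h𝒢diff : ∀ Y ∈ 𝒢, DifferentiableOn ℂ Y Ω)
    (h𝒢add : ∀ Y ∈ 𝒢, ∀ Z ∈ 𝒢, (fun p => Y p + Z p) ∈ 𝒢)
    (h𝒢smul : ∀ (c : ℂ), ∀ Y ∈ 𝒢, (fun p => c • Y p) ∈ 𝒢)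
    (h𝒢bracket : ∀ Y ∈ 𝒢, ∀ Z ∈ 𝒢,
      (fun p => fderiv ℂ Z p (Y p) - fderiv ℂ Y p (Z p)) ∈ 𝒢)
    (htrack : ∀ Y ∈ 𝒢, ∃ f : EuclideanSpace ℂ (Fin 2) → ℂ, ContinuousOn f Ω ∧
      ∀ p ∈ Ω, fderiv ℂ X p (Y p) - fderiv ℂ Y p (X p) = f p • X p) :
    ∃ p ∈ K, ∀ Y ∈ 𝒢, Y p = 0 := by
  have hKne : K.Nonempty := by
    obtain ⟨ε, hε, h⟩ := hess
    obtain ⟨p, hp, h0⟩ := h X (hX.continuousOn.mono hUΩ) (fun p _ => by simpa using hε)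
    exact ⟨p, by rw [hK]; exact ⟨hp, h0⟩⟩
  have hKc : IsCompact K := by
    have : IsClosed (closure U ∩ X ⁻¹' {0}) :=
      (hX.continuousOn.mono hUΩ).preimage_isClosed_of_isClosed isClosed_closure isClosed_singleton
    rw [hK]
    exact hUcomp.of_isClosed_subset this fun p hp => hp.1
  obtain ⟨p, hpK, hpmax⟩ := hKc.exists_isMaxOn hKne continuous_norm.continuousOn
  refine ⟨p, hpK, fun Y hYG => ?_⟩
  have hpU : p ∈ U := hKU hpK
  have hpΩ : p ∈ Ω := hUΩ (subset_closure hpU)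
  have hXp : X p = 0 := by
    rw [hK] at hpK
    exact hpK.2
  have hloc : ∀ᶠ z in nhds p, X z = 0 → ‖z‖ ≤ ‖p‖ := by
    filter_upwards [hUopen.mem_nhds hpU] with z hz hz0
    exact hpmax (by rw [hK]; exact ⟨subset_closure hz, hz0⟩)
  have hY := h𝒢diff Y hYG
  obtain ⟨f, hf, hfe⟩ := htrack Y hYG
  have h1 := aux_max hΩ hX hY hf hfe hpΩ hXp hloc
  have hZG := h𝒢smul Complex.I Y hYG
  obtain ⟨g, hg, hge⟩ := htrack _ hZG
  have h2 := aux_max hΩ hX (h𝒢diff _ hZG) hg hge hpΩ hXp hloc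
  have hd : fderiv ℂ (fun q => Complex.I • Y q) p = Complex.I • fderiv ℂ Y p :=
    fderiv_fun_const_smul (hY.differentiableAt (hΩ.mem_nhds hpΩ)) _
  have hII : Complex.I • Complex.I • fderiv ℂ Y p (Y p) = - fderiv ℂ Y p (Y p) := by
    rw [smul_smul, Complex.I_mul_I, neg_one_smul]
  rw [hd, smul_apply, map_smul, hII, inner_neg_right, Complex.neg_re,
    norm_smul, Complex.norm_I, one_mul] at h2
  have h3 : ‖Y p‖ ^ 2 ≤ 0 := by linarith
  have h4 : ‖Y p‖ = 0 := by nlinarith [norm_nonneg (Y p)]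
  exact norm_eq_zero.1 h4
end

section
/- Let Ω ⊆ ℝⁿ be open, let X, Y, Z : Ω → ℝⁿ be C² vector fields, and let f, g : Ω → ℝ be C¹ functions such that [Y,X] = f • X and [Z,X] = g • X pointwise on Ω, where [V,W](p) := DW(p)(V(p)) − DV(p)(W(p)). Then [Y,Z] tracks X: there exists a continuous function h : Ω → ℝ such that [[Y,Z],X](p) = h(p) • X(p) for all p ∈ Ω. -/
open Set

/-- **Hirsch, Proposition 2.1 (local form).**
If `Y` and `Z` track `X` (with `C¹` tracking functions `f, g` and `C²` vector fields),
then the Lie bracket `[Y, Z]` tracks `X`. -/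
theorem bracket_tracks_of_tracks
    (n : ℕ) (Ω : Set (EuclideanSpace ℝ (Fin n))) (hΩ : IsOpen Ω)
    (X Y Z : EuclideanSpace ℝ (Fin n) → EuclideanSpace ℝ (Fin n))
    (hX : ContDiffOn ℝ 2 X Ω) (hY : ContDiffOn ℝ 2 Y Ω) (hZ : ContDiffOn ℝ 2 Z Ω)
    (f g : EuclideanSpace ℝ (Fin n) → ℝ)
    (hf : ContDiffOn ℝ 1 f Ω) (hg : ContDiffOn ℝ 1 g Ω)
    (htrackY : ∀ p ∈ Ω, fderiv ℝ X p (Y p) - fderiv ℝ Y p (X p) = f p • X p)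
    (htrackZ : ∀ p ∈ Ω, fderiv ℝ X p (Z p) - fderiv ℝ Z p (X p) = g p • X p) :
    ∃ h : EuclideanSpace ℝ (Fin n) → ℝ, ContinuousOn h Ω ∧
      ∀ p ∈ Ω,
        fderiv ℝ X p ((fun q => fderiv ℝ Z q (Y q) - fderiv ℝ Y q (Z q)) p)
          - fderiv ℝ (fun q => fderiv ℝ Z q (Y q) - fderiv ℝ Y q (Z q)) p (X p)
          = h p • X p := by
  refine ⟨fun p => fderiv ℝ g p (Y p) - fderiv ℝ f p (Z p), ?_, ?_⟩
  · exact ((hg.continuousOn_fderiv_of_isOpen hΩ le_rfl).clm_apply hY.continuousOn).sub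
      ((hf.continuousOn_fderiv_of_isOpen hΩ le_rfl).clm_apply hZ.continuousOn)
  · intro p hp
    have hn : Ω ∈ nhds p := hΩ.mem_nhds hp
    have hXp := hX.contDiffAt hn
    have dX : DifferentiableAt ℝ X p := hXp.differentiableAt (by norm_num)
    have df : DifferentiableAt ℝ f p := (hf.contDiffAt hn).differentiableAt (by norm_num)
    have dg : DifferentiableAt ℝ g p := (hg.contDiffAt hn).differentiableAt (by norm_num)
    have J := VectorField.leibniz_identity_lieBracket (𝕜 := ℝ) (n := 2) (by simp)
      (hY.contDiffAt hn) (hZ.contDiffAt hn) hXp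
    have eY : VectorField.lieBracket ℝ Y X =ᶠ[nhds p] fun q => f q • X q := by
      filter_upwards [hn] with q hq using htrackY q hq
    have eZ : VectorField.lieBracket ℝ Z X =ᶠ[nhds p] fun q => g q • X q := by
      filter_upwards [hn] with q hq using htrackZ q hq
    rw [(Filter.EventuallyEq.refl _ Y).lieBracket_vectorField_eq eZ,
      (Filter.EventuallyEq.refl _ Z).lieBracket_vectorField_eq eY,
      VectorField.lieBracket_smul_right dg dX, VectorField.lieBracket_smul_right df dX,
      eY.eq_of_nhds, eZ.eq_of_nhds] at J
    change VectorField.lieBracket ℝ (VectorField.lieBracket ℝ Y Z) X p = _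
    rw [← sub_eq_iff_eq_add] at J
    rw [← J]
    module
end

section
/- Let Ω ⊆ ℝⁿ be open, let X, Y : Ω → ℝⁿ be C¹ vector fields, and let f : Ω → ℝ be continuous with DX(p)(Y(p)) − DY(p)(X(p)) = f(p) • X(p) for all p ∈ Ω (Y tracks X). Let I ⊆ ℝ be an open interval and γ : I → Ω an integral curve of Y, i.e. γ has derivative Y(γ(t)) at every t ∈ I. If X(γ(t₀)) = 0 for some t₀ ∈ I, then X(γ(t)) = 0 for every t ∈ I. In particular the zero set of X is invariant under the local flow of Y. -/
open Set

theorem linear_ode_zero_forward {E : Type*} [NormedAddCommGroup E] [NormedSpace ℝ E]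
    (u : ℝ → E) (A : ℝ → E →L[ℝ] E) (a b : ℝ)
    (hA : ContinuousOn A (Icc a b))
    (hu : ∀ t ∈ Icc a b, HasDerivAt u (A t (u t)) t) (h0 : u a = 0) :
    ∀ t ∈ Icc a b, u t = 0 := by
  obtain ⟨K, hK⟩ := isCompact_Icc.exists_bound_of_continuousOn hA
  refine eq_zero_of_abs_deriv_le_mul_abs_self_of_eq_zero_right (f' := fun t => A t (u t)) (K := K)
    (fun t ht => (hu t ht).continuousAt.continuousWithinAt)
    (fun t ht => (hu t (Ico_subset_Icc_self ht)).hasDerivWithinAt) h0 ?_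
  intro t ht
  exact (A t).le_of_opNorm_le (hK t (Ico_subset_Icc_self ht)) _

/-- **Hirsch, Proposition 2.3, first assertion (local form).**
If `Y` tracks `X`, then the zero set of `X` is invariant under the flow of `Y`:
an integral curve of `Y` that meets `Z(X)` stays in `Z(X)`. -/
theorem zeroSet_invariant_of_tracking
    (n : ℕ) (Ω : Set (EuclideanSpace ℝ (Fin n))) (hΩ : IsOpen Ω)
    (X Y : EuclideanSpace ℝ (Fin n) → EuclideanSpace ℝ (Fin n))
    (hX : ContDiffOn ℝ 1 X Ω) (hY : ContDiffOn ℝ 1 Y Ω)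
    (f : EuclideanSpace ℝ (Fin n) → ℝ) (hf : ContinuousOn f Ω)
    (htrack : ∀ p ∈ Ω, fderiv ℝ X p (Y p) - fderiv ℝ Y p (X p) = f p • X p)
    (I : Set ℝ) (hIopen : IsOpen I) (hIinterval : I.OrdConnected)
    (γ : ℝ → EuclideanSpace ℝ (Fin n)) (hγΩ : ∀ t ∈ I, γ t ∈ Ω)
    (hγ : ∀ t ∈ I, HasDerivAt γ (Y (γ t)) t)
    (t₀ : ℝ) (ht₀ : t₀ ∈ I) (hX0 : X (γ t₀) = 0) :
    ∀ t ∈ I, X (γ t) = 0 := by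
  have hXd : ∀ p ∈ Ω, HasFDerivAt X (fderiv ℝ X p) p := fun p hp =>
    ((hX.differentiableOn one_ne_zero).differentiableAt (hΩ.mem_nhds hp)).hasFDerivAt
  have hDY : ContinuousOn (fderiv ℝ Y) Ω := hY.continuousOn_fderiv_of_isOpen hΩ le_rfl
  have hγc : ContinuousOn γ I := fun t ht => (hγ t ht).continuousAt.continuousWithinAt
  let A : ℝ → EuclideanSpace ℝ (Fin n) →L[ℝ] EuclideanSpace ℝ (Fin n) := fun t =>
    fderiv ℝ Y (γ t) + f (γ t) • ContinuousLinearMap.id ℝ _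
  have hA : ContinuousOn A I :=
    (hDY.comp hγc hγΩ).add ((hf.comp hγc hγΩ).smul continuousOn_const)
  have hu : ∀ t ∈ I, HasDerivAt (fun s => X (γ s)) (A t (X (γ t))) t := by
    intro t ht
    have h := (hXd _ (hγΩ t ht)).comp_hasDerivAt t (hγ t ht)
    have e : A t (X (γ t)) = fderiv ℝ X (γ t) (Y (γ t)) := by
      simp only [A, ContinuousLinearMap.add_apply, ContinuousLinearMap.smul_apply,
        ContinuousLinearMap.id_apply]
      rw [← htrack _ (hγΩ t ht)]
      abel
    rw [e]
    exact h
  intro t ht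
  rcases le_total t₀ t with h | h
  · have hs : Icc t₀ t ⊆ I := hIinterval.out ht₀ ht
    exact linear_ode_zero_forward (fun s => X (γ s)) A t₀ t (hA.mono hs)
      (fun s hs' => hu s (hs hs')) hX0 t ⟨h, le_rfl⟩
  · have hs : ∀ s ∈ Icc (-t₀) (-t), -s ∈ I := fun s hs =>
      hIinterval.out ht ht₀ ⟨by linarith [hs.2], by linarith [hs.1]⟩
    have := linear_ode_zero_forward (fun s => X (γ (-s))) (fun s => - A (-s)) (-t₀) (-t)
      (hA.comp continuous_neg.continuousOn hs).neg
      (fun s hs' => by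
        have := (hu (-s) (hs s hs')).scomp s (hasDerivAt_neg s)
        simpa [Function.comp_def] using this) (by simpa using hX0) (-t) ⟨by linarith, le_rfl⟩
    simpa using this
end

section
/- Let 𝕜 be ℝ or ℂ, let Ω ⊆ 𝕜ⁿ be open, and let X, Y : Ω → 𝕜ⁿ be vector fields that are C¹ over 𝕜 (for 𝕜 = ℂ this means holomorphic with continuous derivative). Let f : Ω → 𝕜 be continuous with DX(p)(Y(p)) − DY(p)(X(p)) = f(p) • X(p) for all p ∈ Ω (Y tracks X). Let I ⊆ ℝ be an open interval and γ : I → Ω an integral curve of Y, i.e. γ has derivative Y(γ(t)) at every t ∈ I. If for some t₀ ∈ I the vectors X(γ(t₀)) and Y(γ(t₀)) are linearly dependent over 𝕜, then for every t ∈ I the vectors X(γ(t)) and Y(γ(t)) are linearly dependent over 𝕜. -/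
open Set

lemma exists_Icc_around {I : Set ℝ} (hI : IsOpen I) (hc : I.OrdConnected) {s t : ℝ}
    (hs : s ∈ I) (ht : t ∈ I) :
    ∃ a b, s ∈ Ioo a b ∧ t ∈ Ioo a b ∧ Icc a b ⊆ I := by
  have hm : min s t ∈ I := by rcases min_choice s t with h | h <;> rw [h] <;> assumption
  have hM : max s t ∈ I := by rcases max_choice s t with h | h <;> rw [h] <;> assumption
  obtain ⟨l, u, h1, h2⟩ := mem_nhds_iff_exists_Ioo_subset.1 (hI.mem_nhds hm)
  obtain ⟨l', u', h1', h2'⟩ := mem_nhds_iff_exists_Ioo_subset.1 (hI.mem_nhds hM)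
  obtain ⟨a, ha, ha'⟩ := exists_between h1.1
  obtain ⟨b, hb, hb'⟩ := exists_between h1'.2
  refine ⟨a, b, ⟨?_, ?_⟩, ⟨?_, ?_⟩, hc.out (h2 ⟨ha, ha'.trans h1.2⟩) (h2' ⟨h1'.1.trans hb, hb'⟩)⟩
  · exact ha'.trans_le (min_le_left _ _)
  · exact (le_max_left _ _).trans_lt hb
  · exact ha'.trans_le (min_le_right _ _)
  · exact (le_max_right _ _).trans_lt hb

lemma linear_ode_eq_zero {𝕜 E : Type*} [RCLike 𝕜] [NormedAddCommGroup E] [NormedSpace 𝕜 E]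
    [NormedSpace ℝ E] {I : Set ℝ} (hI : IsOpen I) (hc : I.OrdConnected)
    (A : ℝ → E →L[𝕜] E) (hA : ContinuousOn A I) (z : ℝ → E)
    (hz : ∀ t ∈ I, HasDerivAt z (A t (z t)) t) {t₀ : ℝ} (ht₀ : t₀ ∈ I) (h0 : z t₀ = 0) :
    ∀ t ∈ I, z t = 0 := by
  intro t ht
  obtain ⟨a, b, hs, ht', hab⟩ := exists_Icc_around hI hc ht₀ ht
  obtain ⟨C, hC⟩ := isCompact_Icc.exists_bound_of_continuousOn (hA.mono hab)
  refine ODE_solution_unique_of_mem_Ioo (v := fun t x => A t x) (s := fun _ => univ)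
    (K := C.toNNReal) (f := z) (g := fun _ => 0) ?_ hs ?_ ?_ h0 ht'
  · intro r hr
    refine ((A r).lipschitz.weaken ?_).lipschitzOnWith
    have := hC r (Ioo_subset_Icc_self hr)
    exact NNReal.le_toNNReal_of_coe_le this
  · intro r hr
    exact ⟨hz r (hab (Ioo_subset_Icc_self hr)), mem_univ _⟩
  · intro r hr
    refine ⟨?_, mem_univ _⟩
    simpa using hasDerivAt_const r (0 : E)

/-- **Hirsch, Proposition 2.3, second assertion (local form).**
If `Y` tracks `X`, the dependency set `Dep_𝕜(X, Y)` is invariant under the flow of `Y`: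
along an integral curve of `Y`, if `X` and `Y` are linearly dependent at one time,
they are linearly dependent at every time. -/
theorem dependency_invariant_of_tracking
    (𝕜 : Type*) [RCLike 𝕜]
    (n : ℕ) (Ω : Set (EuclideanSpace 𝕜 (Fin n))) (hΩ : IsOpen Ω)
    (X Y : EuclideanSpace 𝕜 (Fin n) → EuclideanSpace 𝕜 (Fin n))
    (hX : ContDiffOn 𝕜 1 X Ω) (hY : ContDiffOn 𝕜 1 Y Ω)
    (f : EuclideanSpace 𝕜 (Fin n) → 𝕜) (hf : ContinuousOn f Ω)
    (htrack : ∀ p ∈ Ω, fderiv 𝕜 X p (Y p) - fderiv 𝕜 Y p (X p) = f p • X p)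
    (I : Set ℝ) (hIopen : IsOpen I) (hIinterval : I.OrdConnected)
    (γ : ℝ → EuclideanSpace 𝕜 (Fin n)) (hγΩ : ∀ t ∈ I, γ t ∈ Ω)
    (hγ : ∀ t ∈ I, HasDerivAt γ (Y (γ t)) t)
    (t₀ : ℝ) (ht₀ : t₀ ∈ I)
    (hdep : ¬ LinearIndependent 𝕜 ![X (γ t₀), Y (γ t₀)]) :
    ∀ t ∈ I, ¬ LinearIndependent 𝕜 ![X (γ t), Y (γ t)] := by
  have hγc : ContinuousOn γ I := HasDerivAt.continuousOn hγ
  have hfc : ContinuousOn (fun t => f (γ t)) I := hf.comp hγc hγΩ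
  have hA : ContinuousOn (fun t => fderiv 𝕜 Y (γ t)) I :=
    (hY.continuousOn_fderiv_of_isOpen hΩ le_rfl).comp hγc hγΩ
  have key : ∀ Z : EuclideanSpace 𝕜 (Fin n) → EuclideanSpace 𝕜 (Fin n), ContDiffOn 𝕜 1 Z Ω →
      ∀ t ∈ I, HasDerivAt (fun t => Z (γ t)) (fderiv 𝕜 Z (γ t) (Y (γ t))) t := by
    intro Z hZ t ht
    have h1 : HasFDerivAt Z (fderiv 𝕜 Z (γ t)) (γ t) :=
      ((hZ.differentiableOn one_ne_zero).differentiableAt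
        (hΩ.mem_nhds (hγΩ t ht))).hasFDerivAt
    exact (h1.restrictScalars ℝ).comp_hasDerivAt t (hγ t ht)
  have hF : ∀ t ∈ I, HasDerivAt (fun t => ∫ s in t₀..t, f (γ s)) (f (γ t)) t := by
    intro t ht
    refine intervalIntegral.integral_hasDerivAt_right ?_ ?_ ?_
    · exact (hfc.mono (hIinterval.uIcc_subset ht₀ ht)).intervalIntegrable
    · exact hfc.stronglyMeasurableAtFilter hIopen t ht
    · exact hfc.continuousAt (hIopen.mem_nhds ht)
  set h : ℝ → 𝕜 := fun t => NormedSpace.exp (-∫ s in t₀..t, f (γ s)) with hh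
  have hh' : ∀ t ∈ I, HasDerivAt h (-(f (γ t)) * h t) t := by
    intro t ht
    have h1 := (hasDerivAt_exp (𝕂 := 𝕜) (x := -∫ s in t₀..t, f (γ s))).hasFDerivAt.restrictScalars ℝ
    have h2 := h1.comp_hasDerivAt t (hF t ht).neg
    simpa [hh, Function.comp_def] using h2
  have hne : ∀ t, h t ≠ 0 := fun t => (NormedSpace.isUnit_exp _).ne_zero
  have h0 : h t₀ = 1 := by simp [hh]
  rw [LinearIndependent.pair_iff] at hdep
  push Not at hdep
  obtain ⟨a, b, hab, hab0⟩ := hdep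
  have hz := linear_ode_eq_zero hIopen hIinterval (fun t => fderiv 𝕜 Y (γ t)) hA
    (fun t => (a * h t) • X (γ t) + b • Y (γ t)) ?_ ht₀ (by simpa [h0] using hab)
  · intro t ht hli
    rw [LinearIndependent.pair_iff] at hli
    obtain ⟨h1, h2⟩ := hli _ _ (hz t ht)
    exact hab0 ((mul_eq_zero.1 h1).resolve_right (hne t)) h2
  · intro t ht
    have hd := (((hh' t ht).const_mul a).smul (key X hX t ht)).add
      ((key Y hY t ht).const_smul b)
    refine hd.congr_deriv ?_
    have := sub_eq_iff_eq_add.1 (htrack _ (hγΩ t ht))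
    rw [this]
    simp only [map_add, map_smul]
    module
end

section
/- Let 𝕜 be ℝ or ℂ, let Ω ⊆ 𝕜ⁿ be open, and let X, Y : Ω → 𝕜ⁿ be vector fields that are C¹ over 𝕜 (for 𝕜 = ℂ this means holomorphic with continuous derivative). Let f : Ω → 𝕜 be continuous with DX(p)(Y(p)) − DY(p)(X(p)) = f(p) • X(p) for all p ∈ Ω (Y tracks X). Let I ⊆ ℝ be an open interval containing t₀, let γ : I → Ω be an integral curve of Y, and let v : I → 𝕜ⁿ solve the variational equation along γ: v has derivative DY(γ(t))(v(t)) at every t ∈ I, with initial condition v(t₀) = X(γ(t₀)). Then for every t ∈ I the vectors v(t) and X(γ(t)) are linearly dependent over 𝕜. -/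
open Set

/-- **Hirsch, key lemma in the proof of Proposition 2.3.**
If `Y` tracks `X` and `v` solves the variational equation of `Y` along an integral curve
`γ` of `Y` with `v(t₀) = X(γ(t₀))`, then `v(t)` and `X(γ(t))` are linearly dependent for
all `t` (vanishing of the wedge `TΦ^Y_t(X_p) ∧ X` along the `Y`-curve). -/
theorem variational_solution_dependent_of_tracking
    (𝕜 : Type*) [RCLike 𝕜]
    (n : ℕ) (Ω : Set (EuclideanSpace 𝕜 (Fin n))) (hΩ : IsOpen Ω)
    (X Y : EuclideanSpace 𝕜 (Fin n) → EuclideanSpace 𝕜 (Fin n))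
    (hX : ContDiffOn 𝕜 1 X Ω) (hY : ContDiffOn 𝕜 1 Y Ω)
    (f : EuclideanSpace 𝕜 (Fin n) → 𝕜) (hf : ContinuousOn f Ω)
    (htrack : ∀ p ∈ Ω, fderiv 𝕜 X p (Y p) - fderiv 𝕜 Y p (X p) = f p • X p)
    (I : Set ℝ) (hIopen : IsOpen I) (hIinterval : I.OrdConnected)
    (t₀ : ℝ) (ht₀ : t₀ ∈ I)
    (γ : ℝ → EuclideanSpace 𝕜 (Fin n)) (hγΩ : ∀ t ∈ I, γ t ∈ Ω)
    (hγ : ∀ t ∈ I, HasDerivAt γ (Y (γ t)) t)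
    (v : ℝ → EuclideanSpace 𝕜 (Fin n))
    (hv : ∀ t ∈ I, HasDerivAt v (fderiv 𝕜 Y (γ t) (v t)) t)
    (hv0 : v t₀ = X (γ t₀)) :
    ∀ t ∈ I, ¬ LinearIndependent 𝕜 ![v t, X (γ t)] := by
  intro t ht
  obtain ⟨a, ha, b, hb, ht1, ht2⟩ : ∃ a ∈ I, ∃ b ∈ I, t ∈ Ioo a b ∧ t₀ ∈ Ioo a b := by
    have hmin : min t t₀ ∈ I := by rcases min_choice t t₀ with h | h <;> rw [h] <;> assumption
    have hmax : max t t₀ ∈ I := by rcases max_choice t t₀ with h | h <;> rw [h] <;> assumption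
    obtain ⟨ε, hε, h1⟩ := Metric.isOpen_iff.1 hIopen _ hmin
    obtain ⟨δ, hδ, h2⟩ := Metric.isOpen_iff.1 hIopen _ hmax
    refine ⟨min t t₀ - ε / 2, h1 ?_, max t t₀ + δ / 2, h2 ?_, ?_, ?_⟩
    · rw [Real.ball_eq_Ioo]; constructor <;> linarith
    · rw [Real.ball_eq_Ioo]; constructor <;> linarith
    · constructor
      · linarith [min_le_left t t₀]
      · linarith [le_max_left t t₀]
    · constructor
      · linarith [min_le_right t t₀]
      · linarith [le_max_right t t₀]
  have hsub : Icc a b ⊆ I := hIinterval.out ha hb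
  have hsub' : Ioo a b ⊆ I := Ioo_subset_Icc_self.trans hsub
  have hγc : ContinuousOn γ I := HasDerivAt.continuousOn hγ
  have hfc : ContinuousOn (fun s => f (γ s)) I := hf.comp hγc hγΩ
  have hAc : ContinuousOn (fun s => fderiv 𝕜 Y (γ s)) I :=
    (hY.continuousOn_fderiv_of_isOpen hΩ le_rfl).comp hγc hγΩ
  obtain ⟨K1, hK1⟩ := isCompact_Icc.exists_bound_of_continuousOn (hAc.mono hsub)
  obtain ⟨K2, hK2⟩ := isCompact_Icc.exists_bound_of_continuousOn (hfc.mono hsub)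
  let F : ℝ → 𝕜 := fun s => ∫ u in t₀..s, f (γ u)
  have hF : ∀ s ∈ I, HasDerivAt F (f (γ s)) s := by
    intro s hs
    apply intervalIntegral.integral_hasDerivAt_right
    · exact (hfc.mono (hIinterval.uIcc_subset ht₀ hs)).intervalIntegrable
    · exact hfc.stronglyMeasurableAtFilter hIopen s hs
    · exact hfc.continuousAt (hIopen.mem_nhds hs)
  let V : ℝ → EuclideanSpace 𝕜 (Fin n) → EuclideanSpace 𝕜 (Fin n) :=
    fun s x => fderiv 𝕜 Y (γ s) x + f (γ s) • x
  have hlip : ∀ s ∈ Ioo a b, LipschitzOnWith (K1 + K2).toNNReal (V s) univ := by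
    intro s hs
    have hs' := Ioo_subset_Icc_self hs
    apply LipschitzOnWith.of_dist_le_mul
    intro x _ y _
    rw [dist_eq_norm, dist_eq_norm]
    have e : V s x - V s y = fderiv 𝕜 Y (γ s) (x - y) + f (γ s) • (x - y) := by
      simp only [V, map_sub, smul_sub]; abel
    rw [e]
    calc _ ≤ ‖fderiv 𝕜 Y (γ s) (x - y)‖ + ‖f (γ s) • (x - y)‖ := norm_add_le _ _
      _ ≤ ‖fderiv 𝕜 Y (γ s)‖ * ‖x - y‖ + ‖f (γ s)‖ * ‖x - y‖ := by
        rw [norm_smul]; gcongr; exact ContinuousLinearMap.le_opNorm _ _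
      _ ≤ K1 * ‖x - y‖ + K2 * ‖x - y‖ := by
        gcongr
        · exact hK1 s hs'
        · exact hK2 s hs'
      _ = (K1 + K2) * ‖x - y‖ := by ring
      _ ≤ _ := by gcongr; exact Real.le_coe_toNNReal _
  have hexp : ∀ s ∈ I, HasDerivAt (fun s => NormedSpace.exp (F s))
      (NormedSpace.exp (F s) * f (γ s)) s := by
    intro s hs
    have h1 : HasDerivAt (NormedSpace.exp : 𝕜 → 𝕜) (NormedSpace.exp (F s)) (F s) :=
      hasDerivAt_exp
    have := (h1.hasFDerivAt.restrictScalars ℝ).comp_hasDerivAt s (hF s hs)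
    simpa [mul_comm, Function.comp_def] using this
  have key := ODE_solution_unique_of_mem_Ioo (v := V) (s := fun _ => univ)
    (f := fun s => NormedSpace.exp (F s) • v s) (g := fun s => X (γ s)) hlip ht2
    (fun s hs => ⟨by
      have := (hexp s (hsub' hs)).smul (hv s (hsub' hs))
      refine this.congr_deriv ?_
      simp only [V, map_smul, smul_smul, mul_comm], trivial⟩)
    (fun s hs => ⟨by
      have hp := hγΩ s (hsub' hs)
      have h1 : HasFDerivAt X (fderiv 𝕜 X (γ s)) (γ s) :=
        ((hX.differentiableOn one_ne_zero).differentiableAt (hΩ.mem_nhds hp)).hasFDerivAt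
      have := (h1.restrictScalars ℝ).comp_hasDerivAt s (hγ s (hsub' hs))
      refine this.congr_deriv ?_
      simp only [V, ← htrack _ hp]
      simp, trivial⟩)
    (by simp [F, hv0]) ht1
  intro hli
  rw [LinearIndependent.pair_iff] at hli
  have := (hli (NormedSpace.exp (F t)) (-1) (by simp only at key; rw [key]; simp)).2
  simp at this
end

section
/- Let Ω ⊆ ℝⁿ be open, let X, Y : Ω → ℝⁿ be C¹ vector fields, and let f : Ω → ℝ be continuous with DX(p)(Y(p)) − DY(p)(X(p)) = f(p) • X(p) for all p ∈ Ω (Y tracks X). Let I ⊆ ℝ be an open interval and γ : I → Ω an integral curve of X. Let s ∈ ℝ, let J ⊆ ℝ be an open interval containing 0 and s, and let β : J × I → Ω be a C¹ map such that β(0, t) = γ(t) for all t ∈ I and, for each fixed t ∈ I, the curve u ↦ β(u, t) is an integral curve of Y on J. Then there exists a continuous function λ : I → ℝ with λ(t) > 0 for all t ∈ I such that for every t ∈ I the curve t' ↦ β(s, t') has derivative λ(t) • X(β(s, t)) at t. In particular the time-s map of the local flow of Y carries X-orbits to X-orbits. -/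
open Set

open MeasureTheory Topology in
/-- Fundamental theorem of calculus on an open order-connected set. -/
lemma primitive_hasDerivAt {E : Type*} [NormedAddCommGroup E] [NormedSpace ℝ E] [CompleteSpace E]
    {J : Set ℝ} (hJ : IsOpen J) (hJc : J.OrdConnected) {g : ℝ → E} (hg : ContinuousOn g J)
    {a u : ℝ} (ha : a ∈ J) (hu : u ∈ J) :
    HasDerivAt (fun u => ∫ v in a..u, g v) (g u) u := by
  apply intervalIntegral.integral_hasDerivAt_right
  · exact (hg.mono (hJc.uIcc_subset ha hu)).intervalIntegrable
  · exact hg.stronglyMeasurableAtFilter hJ u hu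
  · exact hg.continuousAt (hJ.mem_nhds hu)

open MeasureTheory Topology in
/-- The variational equation, in integral form. -/
lemma variation_integral {E : Type*} [NormedAddCommGroup E] [NormedSpace ℝ E] [CompleteSpace E]
    {I J : Set ℝ} (hI : IsOpen I) (hJc : J.OrdConnected)
    {b F W G : ℝ → ℝ → E}
    (hF : ContinuousOn (fun q : ℝ × ℝ => F q.1 q.2) (J ×ˢ I))
    (hG : ContinuousOn (fun q : ℝ × ℝ => G q.1 q.2) (J ×ˢ I))
    (hbF : ∀ t ∈ I, ∀ u ∈ J, HasDerivAt (fun u' => b u' t) (F u t) u)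
    (hbW : ∀ t ∈ I, ∀ u ∈ J, HasDerivAt (fun t' => b u t') (W u t) t)
    (hFG : ∀ t ∈ I, ∀ u ∈ J, HasDerivAt (fun t' => F u t') (G u t) t)
    {a u t : ℝ} (ha : a ∈ J) (hu : u ∈ J) (ht : t ∈ I) :
    W u t = W a t + ∫ v in a..u, G v t := by
  have hsub : uIcc a u ⊆ J := hJc.uIcc_subset ha hu
  have hsub' : uIoc a u ⊆ J := uIoc_subset_uIcc.trans hsub
  have slice : ∀ {H : ℝ → ℝ → E}, ContinuousOn (fun q : ℝ × ℝ => H q.1 q.2) (J ×ˢ I) →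
      ∀ t ∈ I, ContinuousOn (fun v => H v t) (uIcc a u) := by
    intro H hH t ht
    exact hH.comp (f := fun v : ℝ => (v, t)) (by fun_prop) (fun v hv => ⟨hsub hv, ht⟩)
  obtain ⟨ε, hε, hball⟩ := Metric.nhds_basis_closedBall.mem_iff.1 (hI.mem_nhds ht)
  obtain ⟨C, hC⟩ := (isCompact_uIcc.prod (isCompact_closedBall t ε)).exists_bound_of_continuousOn
    (hG.mono (prod_mono hsub hball))
  have key := (intervalIntegral.hasDerivAt_integral_of_dominated_loc_of_deriv_le
    (μ := volume) (F := fun t' v => F v t') (F' := fun t' v => G v t') (x₀ := t)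
    (a := a) (b := u) (bound := fun _ => C) (Metric.closedBall_mem_nhds t hε)
    (by
      filter_upwards [hI.mem_nhds ht] with t' ht'
      exact ((slice hF t' ht').intervalIntegrable (μ := volume)).def'.aestronglyMeasurable)
    (slice hF t ht).intervalIntegrable
    ((slice hG t ht).intervalIntegrable (μ := volume)).def'.aestronglyMeasurable
    (Filter.Eventually.of_forall fun v hv x hx => hC (v, x) ⟨uIoc_subset_uIcc hv, hx⟩)
    (by simp)
    (Filter.Eventually.of_forall fun v hv x hx => hFG x (hball hx) v (hsub' hv))).2
  have h2 := (hbW t ht a ha).add key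
  refine (hbW t ht u hu).unique (h2.congr_of_eventuallyEq ?_)
  filter_upwards [hI.mem_nhds ht] with t' ht'
  have := intervalIntegral.integral_eq_sub_of_hasDerivAt
    (fun v hv => hbF t' ht' v (hsub hv)) (slice hF t' ht').intervalIntegrable
  simp [this]

/-- Uniqueness for linear ODEs on an open interval. -/
lemma linear_ode_unique {E : Type*} [NormedAddCommGroup E] [NormedSpace ℝ E]
    {J : Set ℝ} (hJ : IsOpen J) (hJc : J.OrdConnected) {A : ℝ → E →L[ℝ] E}
    (hA : ContinuousOn A J) {w z : ℝ → E} (hw : ∀ u ∈ J, HasDerivAt w (A u (w u)) u)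
    (hz : ∀ u ∈ J, HasDerivAt z (A u (z u)) u) {a s : ℝ} (ha : a ∈ J) (hs : s ∈ J)
    (h0 : w a = z a) : w s = z s := by
  have hmin : min a s ∈ J := by rcases min_choice a s with h | h <;> rwa [h]
  have hmax : max a s ∈ J := by rcases max_choice a s with h | h <;> rwa [h]
  obtain ⟨ε, hε, h1⟩ := Metric.nhds_basis_closedBall.mem_iff.1 (hJ.mem_nhds hmin)
  obtain ⟨δ, hδ, h2⟩ := Metric.nhds_basis_closedBall.mem_iff.1 (hJ.mem_nhds hmax)
  have hl : min a s - ε ∈ J := h1 (by simp [abs_of_pos hε])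
  have hr : max a s + δ ∈ J := h2 (by simp [abs_of_pos hδ])
  have hsub : Icc (min a s - ε) (max a s + δ) ⊆ J := hJc.out hl hr
  obtain ⟨C, hC⟩ := isCompact_Icc.exists_bound_of_continuousOn (hA.mono hsub)
  have hsub' := Ioo_subset_Icc_self.trans hsub
  have ma : min a s ≤ a := min_le_left _ _
  have ms : min a s ≤ s := min_le_right _ _
  have Ma : a ≤ max a s := le_max_left _ _
  have Ms : s ≤ max a s := le_max_right _ _
  refine ODE_solution_unique_of_mem_Ioo (v := fun u x => A u x) (s := fun _ => univ)
    (K := C.toNNReal) (t₀ := a) (a := min a s - ε) (b := max a s + δ) ?_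
    ⟨by linarith, by linarith⟩ (fun u hu => ⟨hw u (hsub' hu), mem_univ _⟩)
    (fun u hu => ⟨hz u (hsub' hu), mem_univ _⟩) h0 ⟨by linarith, by linarith⟩
  intro u hu
  refine ((A u).lipschitz.weaken ?_).lipschitzOnWith
  have := hC u (Ioo_subset_Icc_self hu)
  rw [← norm_toNNReal]
  exact Real.toNNReal_le_toNNReal this

/-- **Hirsch, Proposition 2.4 (local form).**
If `Y` tracks `X`, the time-`s` map of the local flow of `Y` carries `X`-orbits to
`X`-orbits: if `β(u, t)` flows the `X`-integral curve `γ` along `Y`, then `t' ↦ β(s, t')`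
is, up to a positive continuous reparametrizing factor `λ`, an integral curve of `X`. -/
theorem flow_of_tracking_permutes_orbits
    (n : ℕ) (Ω : Set (EuclideanSpace ℝ (Fin n))) (hΩ : IsOpen Ω)
    (X Y : EuclideanSpace ℝ (Fin n) → EuclideanSpace ℝ (Fin n))
    (hX : ContDiffOn ℝ 1 X Ω) (hY : ContDiffOn ℝ 1 Y Ω)
    (f : EuclideanSpace ℝ (Fin n) → ℝ) (hf : ContinuousOn f Ω)
    (htrack : ∀ p ∈ Ω, fderiv ℝ X p (Y p) - fderiv ℝ Y p (X p) = f p • X p)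
    (I : Set ℝ) (hIopen : IsOpen I) (hIinterval : I.OrdConnected)
    (γ : ℝ → EuclideanSpace ℝ (Fin n)) (hγΩ : ∀ t ∈ I, γ t ∈ Ω)
    (hγ : ∀ t ∈ I, HasDerivAt γ (X (γ t)) t)
    (s : ℝ) (J : Set ℝ) (hJopen : IsOpen J) (hJinterval : J.OrdConnected)
    (h0J : (0 : ℝ) ∈ J) (hsJ : s ∈ J)
    (β : ℝ → ℝ → EuclideanSpace ℝ (Fin n))
    (hβΩ : ∀ u ∈ J, ∀ t ∈ I, β u t ∈ Ω)
    (hβC1 : ContDiffOn ℝ 1 (fun q : ℝ × ℝ => β q.1 q.2) (J ×ˢ I))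
    (hβ0 : ∀ t ∈ I, β 0 t = γ t)
    (hβY : ∀ t ∈ I, ∀ u ∈ J, HasDerivAt (fun u' => β u' t) (Y (β u t)) u) :
    ∃ lam : ℝ → ℝ, ContinuousOn lam I ∧ (∀ t ∈ I, 0 < lam t) ∧
      ∀ t ∈ I, HasDerivAt (fun t' => β s t') (lam t • X (β s t)) t := by
  set B : ℝ × ℝ → EuclideanSpace ℝ (Fin n) := fun q => β q.1 q.2 with hBdef
  have hSo : IsOpen (J ×ˢ I) := hJopen.prod hIopen
  have hBS : MapsTo B (J ×ˢ I) Ω := fun q hq => hβΩ _ hq.1 _ hq.2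
  have hBc : ContinuousOn B (J ×ˢ I) := hβC1.continuousOn
  have hB' : ContinuousOn (fderiv ℝ B) (J ×ˢ I) := hβC1.continuousOn_fderiv_of_isOpen hSo le_rfl
  have hY' : ContinuousOn (fderiv ℝ Y) Ω := hY.continuousOn_fderiv_of_isOpen hΩ le_rfl
  have hYd : ∀ p ∈ Ω, HasFDerivAt Y (fderiv ℝ Y p) p := fun p hp =>
    ((hY.differentiableOn one_ne_zero).differentiableAt (hΩ.mem_nhds hp)).hasFDerivAt
  have hXd : ∀ p ∈ Ω, HasFDerivAt X (fderiv ℝ X p) p := fun p hp =>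
    ((hX.differentiableOn one_ne_zero).differentiableAt (hΩ.mem_nhds hp)).hasFDerivAt
  have hBd : ∀ q ∈ J ×ˢ I, HasFDerivAt B (fderiv ℝ B q) q := fun q hq =>
    ((hβC1.differentiableOn one_ne_zero).differentiableAt (hSo.mem_nhds hq)).hasFDerivAt
  set W : ℝ → ℝ → EuclideanSpace ℝ (Fin n) := fun u t => fderiv ℝ B (u, t) (0, 1) with hWdef
  have hWc : ContinuousOn (fun q : ℝ × ℝ => W q.1 q.2) (J ×ˢ I) :=
    hB'.clm_apply continuousOn_const
  have hbW : ∀ t ∈ I, ∀ u ∈ J, HasDerivAt (fun t' => β u t') (W u t) t := by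
    intro t ht u hu
    have h1 : HasDerivAt (fun t' : ℝ => (u, t')) ((0 : ℝ), (1 : ℝ)) t :=
      (hasDerivAt_const t u).prodMk (hasDerivAt_id t)
    exact (hBd (u, t) ⟨hu, ht⟩).comp_hasDerivAt t h1
  have hGc : ContinuousOn (fun q : ℝ × ℝ => fderiv ℝ Y (β q.1 q.2) (W q.1 q.2)) (J ×ˢ I) :=
    (hY'.comp hBc hBS).clm_apply hWc
  have hvar : ∀ t ∈ I, ∀ u ∈ J,
      W u t = W 0 t + ∫ v in (0 : ℝ)..u, fderiv ℝ Y (β v t) (W v t) := by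
    intro t ht u hu
    exact variation_integral (b := β) (F := fun u t => Y (β u t)) (W := W)
      (G := fun u t => fderiv ℝ Y (β u t) (W u t)) hIopen hJinterval
      (hY.continuousOn.comp hBc hBS) hGc hβY hbW
      (fun t ht u hu => (hYd _ (hβΩ u hu t ht)).comp_hasDerivAt t (hbW t ht u hu)) h0J hu ht
  have slice : ∀ t ∈ I, ContinuousOn (fun v : ℝ => (v, t)) J ∧
      MapsTo (fun v : ℝ => (v, t)) J (J ×ˢ I) :=
    fun t ht => ⟨by fun_prop, fun v hv => ⟨hv, ht⟩⟩
  have hfc : ContinuousOn (fun q : ℝ × ℝ => f (β q.1 q.2)) (J ×ˢ I) := hf.comp hBc hBS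
  refine ⟨fun t => Real.exp (-∫ v in (0 : ℝ)..s, f (β v t)), ?_, fun t _ => Real.exp_pos _, ?_⟩
  · refine Real.continuous_exp.comp_continuousOn (ContinuousOn.neg ?_)
    rw [continuousOn_iff_continuous_restrict]
    have hsub : Icc (min 0 s) (max 0 s) ⊆ J := hJinterval.uIcc_subset h0J hsJ
    have hle : min 0 s ≤ max 0 s := min_le_max
    have hc : Continuous (Function.uncurry fun (t : I) (v : ℝ) =>
        f (β (projIcc _ _ hle v : ℝ) t)) :=
      hfc.comp_continuous (f := fun q : I × ℝ => ((projIcc _ _ hle q.2 : ℝ), (q.1 : ℝ)))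
        (by fun_prop) (fun q => ⟨hsub (projIcc _ _ hle q.2).2, q.1.2⟩)
    have := intervalIntegral.continuous_parametric_intervalIntegral_of_continuous'
      (μ := MeasureTheory.volume) hc 0 s
    refine this.congr fun t => ?_
    refine intervalIntegral.integral_congr fun v hv => ?_
    have hv' : v ∈ Icc (min 0 s) (max 0 s) := hv
    simp only [projIcc_of_mem hle hv']
  · intro t ht
    have hb : ContinuousOn (fun v => β v t) J := hBc.comp (slice t ht).1 (slice t ht).2
    have hbΩ : MapsTo (fun v => β v t) J Ω := fun v hv => hβΩ v hv t ht
    have main : W s t = Real.exp (-∫ v in (0 : ℝ)..s, f (β v t)) • X (β s t) := by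
      refine linear_ode_unique (A := fun u => fderiv ℝ Y (β u t)) (w := fun u => W u t)
        (z := fun u => Real.exp (-∫ v in (0 : ℝ)..u, f (β v t)) • X (β u t))
        hJopen hJinterval (hY'.comp hb hbΩ) ?_ ?_ h0J hsJ ?_
      · intro u hu
        have h1 := primitive_hasDerivAt hJopen hJinterval
          (g := fun v => fderiv ℝ Y (β v t) (W v t))
          (hGc.comp (slice t ht).1 (slice t ht).2) h0J hu
        refine (h1.const_add (W 0 t)).congr_of_eventuallyEq ?_
        filter_upwards [hJopen.mem_nhds hu] with u' hu'
        exact hvar t ht u' hu'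
      · intro u hu
        have h1 := primitive_hasDerivAt hJopen hJinterval
          (g := fun v => f (β v t)) (hf.comp hb hbΩ) h0J hu
        have h2 := (hXd _ (hβΩ u hu t ht)).comp_hasDerivAt u (hβY t ht u hu)
        have h3 := h1.neg.exp.smul h2
        have htr := htrack _ (hβΩ u hu t ht)
        have e : fderiv ℝ X (β u t) (Y (β u t))
            = fderiv ℝ Y (β u t) (X (β u t)) + f (β u t) • X (β u t) := by
          rw [← htr]; abel
        refine h3.congr_deriv ?_
        rw [e]
        simp only [map_smul, Function.comp, Pi.neg_apply]
        module
      · have h1 : HasDerivAt γ (W 0 t) t := by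
          refine (hbW t ht 0 h0J).congr_of_eventuallyEq ?_
          filter_upwards [hIopen.mem_nhds ht] with t' ht'
          exact (hβ0 t' ht').symm
        simp [h1.unique (hγ t ht), hβ0 t ht]
    rw [← main]
    exact hbW t ht s hsJ
end

section
/- Let Ω ⊆ ℝⁿ be open and let U ⊆ Ω be an open set whose closure is compact and contained in Ω. Give the space C(Ω, ℝⁿ) of continuous maps Ω → ℝⁿ the compact-open topology. Then the set of continuous vector fields Y : Ω → ℝⁿ such that {p ∈ U : Y(p) = 0} is finite is dense in C(Ω, ℝⁿ). -/
open Set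

/-- **Hirsch, Proposition 3.2(iii) (density of vector fields with finitely many zeros).**
Vector fields with only finitely many zeros in a prescribed precompact open set `U` are
dense in `C(Ω, ℝⁿ)` with the compact-open topology. -/
theorem dense_finitely_many_zeros
    (n : ℕ) (Ω : Set (EuclideanSpace ℝ (Fin n))) (hΩ : IsOpen Ω)
    (U : Set (EuclideanSpace ℝ (Fin n))) (hUopen : IsOpen U)
    (hUcomp : IsCompact (closure U)) (hUΩ : closure U ⊆ Ω) :
    Dense {Y : C(Ω, EuclideanSpace ℝ (Fin n)) |
      {p : Ω | (p : EuclideanSpace ℝ (Fin n)) ∈ U ∧ Y p = 0}.Finite} := by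
  intro X
  rw [mem_closure_iff_nhds_basis (nhds_basis_uniformity'
    (Metric.uniformity_basis_dist.compactConvergenceUniformity
      (α := Ω) (β := EuclideanSpace ℝ (Fin n))))]
  rintro ⟨K, ε⟩ ⟨hK, hε⟩
  dsimp only at hK hε
  have : CompactSpace K := isCompact_iff_compactSpace.1 hK
  -- extend `X` restricted to `K` to the whole space
  have he : Topology.IsClosedEmbedding
      (fun x : K => ((x : Ω) : EuclideanSpace ℝ (Fin n))) :=
    Continuous.isClosedEmbedding (by fun_prop)
      (Subtype.val_injective.comp Subtype.val_injective)
  obtain ⟨g, hg⟩ := ContinuousMap.exists_extension' he (X.restrict K)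
  -- smooth it
  obtain ⟨f, hf, hfg, -⟩ := g.continuous.exists_contDiff_approx (ε := fun _ => ε / 2) 1
    continuous_const (fun _ => half_pos hε)
  have hfd : ∀ x, HasFDerivAt f (fderiv ℝ f x) x := fun x =>
    (hf.differentiable (by simp) x).hasFDerivAt
  -- a small regular value
  have hsard : MeasureTheory.volume (f '' {x | (fderiv ℝ f x).det = 0}) = 0 :=
    MeasureTheory.addHaar_image_eq_zero_of_det_fderivWithin_eq_zero _
      (fun x _ => (hfd x).hasFDerivWithinAt) (fun x hx => hx)
  obtain ⟨v, hv, hvε⟩ : ∃ v, v ∉ f '' {x | (fderiv ℝ f x).det = 0} ∧ ‖v‖ < ε / 2 := by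
    by_contra! hcon
    have hsub : Metric.ball (0 : EuclideanSpace ℝ (Fin n)) (ε / 2) ⊆
        f '' {x | (fderiv ℝ f x).det = 0} := by
      intro v hv
      by_contra hv'
      exact absurd (hcon v hv') (not_le.2 (mem_ball_zero_iff.1 hv))
    exact (Metric.measure_ball_pos MeasureTheory.volume _ (half_pos hε)).ne'
      (MeasureTheory.measure_mono_null hsub hsard)
  have hfin : {x | x ∈ U ∧ f x = v}.Finite := by
    by_contra hinf
    obtain ⟨x, -, hx⟩ := Set.Infinite.exists_accPt_of_subset_isCompact hinf hUcomp
      (fun x hx => subset_closure hx.1)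
    rw [accPt_iff_frequently_nhdsNE] at hx
    have hne : ∀ᶠ z in nhdsWithin x {x}ᶜ, f z ≠ v := by
      by_cases hdet : (fderiv ℝ f x).det = 0
      · have : f x ≠ v := fun h => hv ⟨x, hdet, h⟩
        exact (hf.continuous.continuousAt.eventually_ne this).filter_mono nhdsWithin_le_nhds
      · refine (hfd x).eventually_ne
          ⟨_, ((fderiv ℝ f x).toContinuousLinearEquivOfDetNeZero hdet).antilipschitz⟩
    exact hx (hne.mono fun z hz h => hz h.2)
  refine ⟨⟨fun p => f p - v, by have := hf.continuous; fun_prop⟩, ?_, ?_⟩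
  · refine (hfin.preimage (f := ((↑) : Ω → EuclideanSpace ℝ (Fin n)))
      Subtype.val_injective.injOn).subset ?_
    rintro p ⟨hp, h0⟩
    exact ⟨hp, sub_eq_zero.1 h0⟩
  · intro p hp
    have h1 : g p = X p := congrFun hg ⟨p, hp⟩
    have h2 := hfg p
    rw [h1, dist_comm] at h2
    change dist (X p) (f p - v) < ε
    calc dist (X p) (f p - v) ≤ dist (X p) (f p) + dist (f p) (f p - v) := dist_triangle _ _ _
      _ = dist (X p) (f p) + ‖v‖ := by simp [dist_eq_norm]
      _ < ε := by linarith
end
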